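/- arXiv:1310.3546 — 3 statements merged into one kernel-verified Lean document; each statement's English description precedes it below -/
import Mathlib

section
/- For the symmetric group S_n acting on its (n-1)-dimensional reflection representation E, the elliptic pairing ⟨σ,σ'⟩^el = (1/n!) Σ_{w∈S_n} σ(w)σ'(w)det_E(1-w) has radical equal to the span of all characters induced from proper Young (parabolic) subgroups, and the quotient R(S_n)/rad has rank 1, spanned by the class of the sign character. -/
/-!
STATEMENT 0: for S_n with its standard (n-1)-dimensional reflection representation
E and elliptic pairing ⟨σ,σ'⟩^el = (1/n!) Σ_w σ(w)σ'(w)det_E(1-w), the radical of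
the pairing (inside the space of class functions = the span of the characters)
equals the span of the characters induced from proper Young (parabolic) subgroups,
and the quotient has rank 1, spanned by the class of the sign character.
-/

open scoped BigOperators

set_option maxHeartbeats 1000000
set_option synthInstance.maxHeartbeats 400000

noncomputable section

/-- The field `ℚ(q)` of rational functions. -/
abbrev K : Type := RatFunc ℚ

/-- The sum-of-coordinates linear functional on `K^n`. -/
def sumCoords (n : ℕ) : (Fin n → K) →ₗ[K] K :=
  ∑ i : Fin n, LinearMap.proj i

/-- The standard (reflection) representation `E = {x ∈ K^n : Σ x_i = 0}` of `S_n`. -/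
def Esub (n : ℕ) : Submodule K (Fin n → K) := LinearMap.ker (sumCoords n)

/-- The permutation action of `w ∈ S_n` on `K^n`. -/
def permL (n : ℕ) (w : Equiv.Perm (Fin n)) : (Fin n → K) →ₗ[K] (Fin n → K) :=
  LinearMap.funLeft K K w

lemma permL_mem (n : ℕ) (w : Equiv.Perm (Fin n)) (x : Fin n → K) (hx : x ∈ Esub n) :
    permL n w x ∈ Esub n := by
  simp only [Esub, LinearMap.mem_ker, sumCoords, LinearMap.sum_apply, LinearMap.proj_apply,
    permL, LinearMap.funLeft_apply] at hx ⊢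
  rw [← hx]
  exact Fintype.sum_equiv w _ _ (fun i => rfl)

/-- The action of `w` restricted to the reflection representation `E`. -/
def permE (n : ℕ) (w : Equiv.Perm (Fin n)) : Esub n →ₗ[K] Esub n :=
  (permL n w).restrict (fun x hx => permL_mem n w x hx)

/-- `det_E(1 - q w)`. -/
def detE (n : ℕ) (q : K) (w : Equiv.Perm (Fin n)) : K :=
  LinearMap.det ((LinearMap.id : Esub n →ₗ[K] Esub n) - q • permE n w)


open scoped Classical

/-- The elliptic pairing `⟨σ,σ'⟩^el = (1/n!) Σ_w σ(w) σ'(w) det_E(1-w)` on `S_n`. -/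
def ellPair (n : ℕ) (σ σ' : Equiv.Perm (Fin n) → K) : K :=
  ((n.factorial : K))⁻¹ * ∑ w : Equiv.Perm (Fin n), σ w * σ' w * detE n 1 w

/-- The submodule of `K`-valued class functions on a finite group. -/
def classFuns (G : Type) [Group G] [Fintype G] : Submodule K (G → K) where
  carrier := {f | ∀ g h : G, f (g * h * g⁻¹) = f h}
  add_mem' := by intro a b ha hb g h; simp [ha g h, hb g h]
  zero_mem' := by intro g h; rfl
  smul_mem' := by intro c a ha g h; simp [ha g h]

/-- The Young (parabolic) subgroup of `S_n` preserving the fibers of `f`. -/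
def youngSubgroup (n : ℕ) (f : Fin n → ℕ) : Subgroup (Equiv.Perm (Fin n)) where
  carrier := {w | ∀ i, f (w i) = f i}
  one_mem' := by intro i; rfl
  mul_mem' := by
    intro a b ha hb i
    simpa [Equiv.Perm.mul_apply] using (ha (b i)).trans (hb i)
  inv_mem' := by
    intro a ha i
    simpa using (ha (a⁻¹ i)).symm

/-- The class function on `G` induced from the function `φ` on the subgroup `H`. -/
def indCF {G : Type} [Group G] [Fintype G] (H : Subgroup G) (φ : G → K) : G → K :=
  fun w => ((Nat.card H : K))⁻¹ *
    ∑ g : G, if g⁻¹ * w * g ∈ H then φ (g⁻¹ * w * g) else 0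

/-- The radical of the elliptic pairing inside the space of class functions on `S_n`. -/
def ellRadical (n : ℕ) : Submodule K (Equiv.Perm (Fin n) → K) where
  carrier := {σ | σ ∈ classFuns (Equiv.Perm (Fin n)) ∧
      ∀ σ' ∈ classFuns (Equiv.Perm (Fin n)), ellPair n σ σ' = 0}
  zero_mem' := by
    refine ⟨Submodule.zero_mem _, ?_⟩
    intro σ' _
    simp [ellPair]
  add_mem' := by
    rintro a b ⟨ha1, ha2⟩ ⟨hb1, hb2⟩
    refine ⟨Submodule.add_mem _ ha1 hb1, ?_⟩
    intro σ' hσ'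
    have h : ellPair n (a + b) σ' = ellPair n a σ' + ellPair n b σ' := by
      simp only [ellPair, Pi.add_apply, add_mul, Finset.sum_add_distrib, mul_add]
    rw [h, ha2 σ' hσ', hb2 σ' hσ', add_zero]
  smul_mem' := by
    rintro c a ⟨ha1, ha2⟩
    refine ⟨Submodule.smul_mem _ _ ha1, ?_⟩
    intro σ' hσ'
    have h : ellPair n (c • a) σ' = c * ellPair n a σ' := by
      simp only [ellPair, Pi.smul_apply, smul_eq_mul]
      rw [show (∑ w : Equiv.Perm (Fin n), c * a w * σ' w * detE n 1 w)
            = c * ∑ w : Equiv.Perm (Fin n), a w * σ' w * detE n 1 w by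
          rw [Finset.mul_sum]; exact Finset.sum_congr rfl (fun w _ => by ring)]
      ring
    rw [h, ha2 σ' hσ', mul_zero]

/-- The span of all functions induced from proper Young subgroups
(`f` non-constant corresponds to a composition with more than one part). -/
def indSpan (n : ℕ) : Submodule K (Equiv.Perm (Fin n) → K) :=
  Submodule.span K {χ | ∃ (f : Fin n → ℕ) (φ : Equiv.Perm (Fin n) → K),
    (∃ i j, f i ≠ f j) ∧ χ = indCF (youngSubgroup n f) φ}

/-- The sign character of `S_n`. -/
def sgnChar (n : ℕ) : Equiv.Perm (Fin n) → K := fun w => ((Equiv.Perm.sign w : ℤ) : K)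

/-- `w` lies in no proper Young subgroup. -/
def IsEll (n : ℕ) (w : Equiv.Perm (Fin n)) : Prop :=
  ∀ f : Fin n → ℕ, w ∈ youngSubgroup n f → ∀ i j, f i = f j

lemma mem_young (n : ℕ) (f : Fin n → ℕ) (w : Equiv.Perm (Fin n)) :
    w ∈ youngSubgroup n f ↔ ∀ i, f (w i) = f i := Iff.rfl

lemma mem_E (n : ℕ) (x : Fin n → K) : x ∈ Esub n ↔ ∑ i, x i = 0 := by
  simp [Esub, sumCoords]

lemma isEll_conj (n : ℕ) (g w : Equiv.Perm (Fin n)) (hw : IsEll n w) :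
    IsEll n (g * w * g⁻¹) := by
  intro f hf i j
  have := hw (fun i => f (g i)) (by
    intro i
    have := hf (g i)
    simpa using this) (g⁻¹ i) (g⁻¹ j)
  simpa using this

lemma isEll_conj_iff (n : ℕ) (g w : Equiv.Perm (Fin n)) :
    IsEll n (g * w * g⁻¹) ↔ IsEll n w := by
  refine ⟨fun h => ?_, isEll_conj n g w⟩
  have := isEll_conj n g⁻¹ _ h
  simpa [mul_assoc] using this

lemma detE_eq_zero_iff (n : ℕ) (hn : 1 ≤ n) (w : Equiv.Perm (Fin n)) :
    detE n 1 w = 0 ↔ ¬ IsEll n w := by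
  have hn0 : (n : K) ≠ 0 := by exact_mod_cast (by omega : n ≠ 0)
  unfold detE
  rw [LinearMap.det_eq_zero_iff_ker_ne_bot, Submodule.ne_bot_iff]
  constructor
  · rintro ⟨x, hx, hx0⟩ hell
    have hfix : ∀ i, x.1 (w i) = x.1 i := by
      intro i
      rw [LinearMap.mem_ker, LinearMap.sub_apply, one_smul, sub_eq_zero] at hx
      have := congrArg (fun y : Esub n => y.1 i) hx
      exact this.symm
    apply hx0
    have i0 : Fin n := ⟨0, hn⟩
    have hc : ∀ i, x.1 i = x.1 i0 := by
      intro i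
      have := hell (fun i => if x.1 i = x.1 i0 then 0 else 1) (by
        intro i; simp only [hfix]) i i0
      by_contra h
      simp [h] at this
    have hs := (mem_E n x.1).1 x.2
    rw [Finset.sum_congr rfl (fun i _ => hc i)] at hs
    simp only [Finset.sum_const, Finset.card_univ, Fintype.card_fin, nsmul_eq_mul,
      mul_eq_zero, hn0, false_or] at hs
    ext i
    rw [hc i, hs]; rfl
  · intro h
    unfold IsEll at h
    push Not at h
    obtain ⟨f, hf, i, j, hij⟩ := h
    let m : K := (∑ i, (f i : K)) / n
    refine ⟨⟨fun i => (f i : K) - m, ?_⟩, ?_, ?_⟩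
    · rw [mem_E]
      simp only [Finset.sum_sub_distrib, Finset.sum_const, Finset.card_univ, Fintype.card_fin,
        nsmul_eq_mul, m]
      field_simp
      ring
    · rw [LinearMap.mem_ker, LinearMap.sub_apply, one_smul, sub_eq_zero]
      apply Subtype.ext
      funext i
      change (f i : K) - m = (f (w i) : K) - m
      rw [hf i]
    · intro h0
      have h1 := fun i => congrArg (fun y : Esub n => y.1 i) h0
      have hi : (f i : K) - m = 0 := h1 i
      have hj : (f j : K) - m = 0 := h1 j
      apply hij
      have : (f i : K) = f j := by linear_combination hi - hj
      exact_mod_cast this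

lemma isEll_isConj (n : ℕ) (v w : Equiv.Perm (Fin n)) (hv : IsEll n v) (hw : IsEll n w) :
    IsConj v w := by
  by_cases hn : n ≤ 1
  · have : Subsingleton (Fin n) := Fin.subsingleton_iff_le_one.2 hn
    rw [Subsingleton.elim v w]
  have key : ∀ u, IsEll n u → u.IsCycle ∧ u.support = Finset.univ := by
    intro u hu
    have hs : ∀ i j, u.SameCycle i j := by
      intro i j
      have := hu (fun k => if u.SameCycle i k then 0 else 1) (by
        intro k; simp only [Equiv.Perm.sameCycle_apply_right]) j i
      by_contra h
      simp [h, Equiv.Perm.SameCycle.refl] at this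
    have hne : ∀ i, u i ≠ i := by
      intro i hi
      have : Nontrivial (Fin n) := Fin.nontrivial_iff_two_le.2 (by omega)
      obtain ⟨j, hj⟩ := exists_ne i
      have := (Equiv.Perm.SameCycle.eq_of_left (hs i j) hi)
      exact hj this.symm
    refine ⟨⟨⟨0, by omega⟩, hne _, fun y _ => hs _ _⟩, ?_⟩
    ext i; simp [hne]
  refine (key v hv).1.isConj (key w hw).1 ?_
  rw [(key v hv).2, (key w hw).2]

lemma exists_isEll (n : ℕ) : ∃ c, IsEll n c := by
  rcases n with _ | n
  · exact ⟨1, fun f _ i => i.elim0⟩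
  refine ⟨finRotate (n + 1), fun f hf => ?_⟩
  have h : ∀ i : Fin (n + 1), f i = f 0 := by
    intro i
    induction i using Fin.induction with
    | zero => rfl
    | succ i ih =>
      have := hf i.castSucc
      rw [finRotate_apply, Fin.coeSucc_eq_succ] at this
      rw [this, ih]
  intro i j
  rw [h i, h j]

lemma permE_mul (n : ℕ) (g h : Equiv.Perm (Fin n)) :
    permE n (g * h) = permE n h * permE n g := by
  rfl

lemma permE_one (n : ℕ) : permE n 1 = 1 := by
  rfl

lemma aux_conj {R : Type*} [Ring R] (a b c : R) (h : a * c = 1) :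
    1 - a * (b * c) = a * (1 - b) * c := by
  rw [mul_sub, sub_mul, mul_one, h, mul_assoc]

lemma detE_conj (n : ℕ) (g w : Equiv.Perm (Fin n)) :
    detE n 1 (g * w * g⁻¹) = detE n 1 w := by
  have h1 : permE n g⁻¹ * permE n g = 1 := by rw [← permE_mul, mul_inv_cancel, permE_one]
  have h : (LinearMap.id : Esub n →ₗ[K] Esub n) - (1 : K) • permE n (g * w * g⁻¹)
      = permE n g⁻¹ * (LinearMap.id - (1 : K) • permE n w) * permE n g := by
    rw [permE_mul, permE_mul, one_smul, one_smul]
    exact aux_conj (R := Module.End K (Esub n)) (permE n g⁻¹) (permE n w) (permE n g) h1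
  unfold detE
  rw [h, map_mul, map_mul, mul_right_comm, ← map_mul, h1, map_one, one_mul]

lemma class_conj {n : ℕ} {σ : Equiv.Perm (Fin n) → K}
    (hσ : σ ∈ classFuns (Equiv.Perm (Fin n))) {v w : Equiv.Perm (Fin n)} (h : IsConj v w) :
    σ v = σ w := by
  obtain ⟨c, rfl⟩ := isConj_iff.1 h
  exact (hσ c v).symm

lemma mem_rad_iff (n : ℕ) (hn : 1 ≤ n) (σ : Equiv.Perm (Fin n) → K) :
    σ ∈ ellRadical n ↔ σ ∈ classFuns (Equiv.Perm (Fin n)) ∧ ∀ c, IsEll n c → σ c = 0 := by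
  constructor
  · rintro ⟨hσ, h⟩
    refine ⟨hσ, fun c hc => ?_⟩
    have h2 := h (fun w => if IsEll n w then 1 else 0) (by
      intro g w; simp only [isEll_conj_iff])
    unfold ellPair at h2
    have h3 : ∀ w : Equiv.Perm (Fin n), σ w * (if IsEll n w then (1 : K) else 0) * detE n 1 w
        = if IsEll n w then σ c * detE n 1 c else 0 := by
      intro w
      split_ifs with hw
      · have hcw := isEll_isConj n c w hc hw
        rw [class_conj hσ hcw]
        obtain ⟨g, rfl⟩ := isConj_iff.1 hcw
        rw [detE_conj, mul_one]
      · simp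
    simp only [h3] at h2
    rw [← Finset.sum_filter, Finset.sum_const, nsmul_eq_mul] at h2
    have hd : detE n 1 c ≠ 0 := fun h0 => (detE_eq_zero_iff n hn c).1 h0 hc
    have hf : ((n.factorial : K))⁻¹ ≠ 0 :=
      inv_ne_zero (by exact_mod_cast n.factorial_ne_zero)
    have hcard : ((Finset.univ.filter (fun w => IsEll n w)).card : K) ≠ 0 := by
      have : (Finset.univ.filter (fun w => IsEll n w)).card ≠ 0 :=
        Finset.card_ne_zero.2 ⟨c, by simp [hc]⟩
      exact_mod_cast this
    have h5 := (mul_eq_zero.1 ((mul_eq_zero.1 h2).resolve_left hf)).resolve_left hcard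
    exact (mul_eq_zero.1 h5).resolve_right hd
  · rintro ⟨hσ, h⟩
    refine ⟨hσ, fun σ' _ => ?_⟩
    unfold ellPair
    rw [Finset.sum_eq_zero, mul_zero]
    intro w _
    by_cases hw : IsEll n w
    · rw [h w hw]; ring
    · rw [(detE_eq_zero_iff n hn w).2 hw, mul_zero]

lemma sgn_class (n : ℕ) : sgnChar n ∈ classFuns (Equiv.Perm (Fin n)) := by
  intro g h
  have : Equiv.Perm.sign (g * h * g⁻¹) = Equiv.Perm.sign h := by
    rw [map_mul, map_mul, mul_right_comm, ← map_mul, mul_inv_cancel, map_one, one_mul]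
  simp only [sgnChar, this]

lemma sgn_ne (n : ℕ) (w : Equiv.Perm (Fin n)) : sgnChar n w ≠ 0 := by
  unfold sgnChar
  rcases Int.units_eq_one_or (Equiv.Perm.sign w) with h | h <;> simp [h]

lemma indCF_class (n : ℕ) (H : Subgroup (Equiv.Perm (Fin n))) (φ : Equiv.Perm (Fin n) → K) :
    indCF H φ ∈ classFuns (Equiv.Perm (Fin n)) := by
  intro g w
  unfold indCF
  congr 1
  refine Fintype.sum_equiv (Equiv.mulLeft g⁻¹) _ _ (fun x => ?_)
  simp [mul_assoc]

lemma ind_le (n : ℕ) (hn : 1 ≤ n) : indSpan n ≤ ellRadical n := by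
  unfold indSpan
  rw [Submodule.span_le]
  rintro _ ⟨f, φ, ⟨i, j, hij⟩, rfl⟩
  change _ ∈ ellRadical n
  rw [mem_rad_iff n hn]
  refine ⟨indCF_class n _ _, fun c hc => ?_⟩
  unfold indCF
  rw [Finset.sum_eq_zero, mul_zero]
  intro g _
  rw [if_neg]
  intro hg
  have := isEll_conj n g⁻¹ c hc
  rw [inv_inv] at this
  exact hij (this f hg i j)

lemma le_ind (n : ℕ) (hn : 1 ≤ n) : ellRadical n ≤ indSpan n := by
  intro σ hσ
  rw [mem_rad_iff n hn] at hσ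
  obtain ⟨hσ, h0⟩ := hσ
  have hex : ∀ v : Equiv.Perm (Fin n), ∃ f : Fin n → ℕ,
      ¬ IsEll n v → v ∈ youngSubgroup n f ∧ ∃ i j, f i ≠ f j := by
    intro v
    by_cases hv : IsEll n v
    · exact ⟨fun _ => 0, fun h => absurd hv h⟩
    · have hv' := hv
      unfold IsEll at hv'
      push Not at hv'
      obtain ⟨f, hf, i, j, hij⟩ := hv'
      exact ⟨f, fun _ => ⟨hf, i, j, hij⟩⟩
  choose F hF using hex
  have hfac : (n.factorial : K) ≠ 0 := by exact_mod_cast n.factorial_ne_zero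
  have key : σ = (n.factorial : K)⁻¹ • ∑ v, (σ v * (Nat.card (youngSubgroup n (F v)) : K)) •
      indCF (youngSubgroup n (F v)) (fun w => if w = v then 1 else 0) := by
    funext w
    rw [Pi.smul_apply, Finset.sum_apply, smul_eq_mul, eq_inv_mul_iff_mul_eq₀ hfac]
    have h1 : ∀ v : Equiv.Perm (Fin n),
        ((σ v * (Nat.card (youngSubgroup n (F v)) : K)) •
          indCF (youngSubgroup n (F v)) (fun w => if w = v then 1 else 0)) w
        = ∑ g : Equiv.Perm (Fin n), if g⁻¹ * w * g = v then σ v else 0 := by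
      intro v
      by_cases hv : IsEll n v
      · simp [h0 v hv]
      · have hc : (Nat.card (youngSubgroup n (F v)) : K) ≠ 0 := by
          exact_mod_cast Nat.card_pos.ne'
        rw [Pi.smul_apply, smul_eq_mul]
        unfold indCF
        rw [mul_assoc, mul_inv_cancel_left₀ hc, Finset.mul_sum]
        refine Finset.sum_congr rfl (fun g _ => ?_)
        by_cases hg : g⁻¹ * w * g = v
        · simp only [hg, if_pos (hF v hv).1, if_true, mul_one]
        · simp only [if_neg hg, ite_self, mul_zero]
    rw [Finset.sum_congr rfl (fun v _ => h1 v), Finset.sum_comm]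
    have h2 : ∀ g : Equiv.Perm (Fin n),
        (∑ v, if g⁻¹ * w * g = v then σ v else 0) = σ w := by
      intro g
      rw [Finset.sum_ite_eq, if_pos (Finset.mem_univ _)]
      have := hσ g⁻¹ w
      rwa [inv_inv] at this
    rw [Finset.sum_congr rfl (fun g _ => h2 g)]
    simp [Fintype.card_perm]
  rw [key]
  refine Submodule.smul_mem _ _ (Submodule.sum_mem _ (fun v _ => ?_))
  by_cases hv : IsEll n v
  · rw [h0 v hv, zero_mul, zero_smul]; exact Submodule.zero_mem _
  · exact Submodule.smul_mem _ _ (Submodule.subset_span ⟨F v, _, (hF v hv).2, rfl⟩)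

/-- the radical of the elliptic pairing of S_n equals the span of the
characters induced from proper Young subgroups, and the quotient of the class
functions by the radical has rank 1, spanned by the class of the sign character. -/
theorem statement0 (n : ℕ) (hn : 1 ≤ n) :
    ellRadical n = indSpan n ∧
    sgnChar n ∉ ellRadical n ∧
    ellRadical n ⊔ Submodule.span K {sgnChar n} = classFuns (Equiv.Perm (Fin n)) := by
  obtain ⟨c, hc⟩ := exists_isEll n
  refine ⟨le_antisymm (le_ind n hn) (ind_le n hn), ?_, le_antisymm ?_ ?_⟩
  · intro h
    exact sgn_ne n c (((mem_rad_iff n hn _).1 h).2 c hc)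
  · refine sup_le (fun σ h => h.1) ?_
    rw [Submodule.span_le, Set.singleton_subset_iff]
    exact sgn_class n
  · intro σ hσ
    rw [Submodule.mem_sup]
    refine ⟨σ - (σ c / sgnChar n c) • sgnChar n, ?_, (σ c / sgnChar n c) • sgnChar n,
      Submodule.smul_mem _ _ (Submodule.mem_span_singleton_self _), by simp⟩
    have hcl : σ - (σ c / sgnChar n c) • sgnChar n ∈ classFuns (Equiv.Perm (Fin n)) :=
      Submodule.sub_mem _ hσ (Submodule.smul_mem _ _ (sgn_class n))
    rw [mem_rad_iff n hn]
    refine ⟨hcl, fun d hd => ?_⟩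
    rw [← class_conj hcl (isEll_isConj n c d hc hd)]
    simp [sgn_ne n c]
end
end

section
/- For any finite Weyl group W with reflection representation E of dimension l, the elliptic fake degree of the sign character equals (1-q)^l · Π_{i=1}^{l} (1-q^{m_i})/(1-q^{m_i+1}), where m_1,...,m_l are the exponents of W. -/
set_option maxHeartbeats 1000000
set_option synthInstance.maxHeartbeats 400000

/-!
STATEMENT 4: For a finite Weyl group `W` with reflection representation `E` of
dimension `l` (formalized: a finite group with a faithful rational representation
generated by reflections) whose exponents are `m_1,…,m_l` (formalized via the
Molien/Shephard–Todd identity characterizing the degrees `m_i + 1`), the elliptic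
fake degree of the sign character `w ↦ det_E(w)` equals
`(1-q)^l · Π_i (1-q^{m_i})/(1-q^{m_i+1})`.
-/

open scoped BigOperators

noncomputable section

/-- entries of a rational matrix viewed in `K = ℚ(q)`. -/
def mapK {l : ℕ} (M : Matrix (Fin l) (Fin l) ℚ) : Matrix (Fin l) (Fin l) K :=
  M.map RatFunc.C

/-- the increasing enumeration of a `k`-subset -/
def emb {l k : ℕ} (I : Set.powersetCard (Fin l) k) : Fin k ↪o Fin l :=
  Set.powersetCard.ofFinEmbEquiv.symm I

/-- compound matrix -/
def cpd {R : Type*} [CommRing R] {l : ℕ} (k : ℕ) (A : Matrix (Fin l) (Fin l) R) :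
    Matrix (Set.powersetCard (Fin l) k) (Set.powersetCard (Fin l) k) R :=
  Matrix.of fun I J => (A.submatrix (emb I) (emb J)).det

theorem cpd_eq {R : Type*} [CommRing R] {l : ℕ} (k : ℕ) (A : Matrix (Fin l) (Fin l) R) :
    cpd k A = LinearMap.toMatrix ((Pi.basisFun R (Fin l)).exteriorPower k)
      ((Pi.basisFun R (Fin l)).exteriorPower k) (exteriorPower.map k (Matrix.toLin' A)) := by
  ext I J
  rw [LinearMap.toMatrix_apply, exteriorPower.basis_repr_apply, exteriorPower.basis_apply,
    exteriorPower.map_apply_ιMulti_family]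
  unfold exteriorPower.ιMultiDual exteriorPower.ιMulti_family
  rw [exteriorPower.pairingDual_ιMulti_ιMulti]
  rw [← Matrix.det_transpose]
  simp [cpd, emb, Matrix.submatrix, Matrix.transpose]

theorem cpd_mul {R : Type*} [CommRing R] {l : ℕ} (k : ℕ) (A B : Matrix (Fin l) (Fin l) R) :
    cpd k (A * B) = cpd k A * cpd k B := by
  rw [cpd_eq, cpd_eq, cpd_eq, Matrix.toLin'_mul, exteriorPower.map_comp, LinearMap.toMatrix_comp _ ((Pi.basisFun R (Fin l)).exteriorPower k)]

theorem cpd_one {R : Type*} [CommRing R] {l : ℕ} (k : ℕ) :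
    cpd k (1 : Matrix (Fin l) (Fin l) R) = 1 := by
  rw [cpd_eq, Matrix.toLin'_one, exteriorPower.map_id, LinearMap.toMatrix_id]

theorem cpd_map {R R' : Type*} [CommRing R] [CommRing R'] (f : R →+* R') {l : ℕ} (k : ℕ)
    (A : Matrix (Fin l) (Fin l) R) :
    cpd k (A.map f) = (cpd k A).map f := by
  ext I J
  simp only [cpd, Matrix.of_apply, Matrix.map_apply, RingHom.map_det, RingHom.mapMatrix_apply]
  rfl

theorem cpd_transpose {R : Type*} [CommRing R] {l : ℕ} (k : ℕ)
    (A : Matrix (Fin l) (Fin l) R) :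
    cpd k (A.transpose) = (cpd k A).transpose := by
  ext I J
  simp only [cpd, Matrix.of_apply, Matrix.transpose_apply]
  rw [← Matrix.det_transpose]
  rfl

theorem det_one_sub_eq {R : Type*} [CommRing R] {l : ℕ} (A : Matrix (Fin l) (Fin l) R) :
    Matrix.det (1 - A) = ∑ k ∈ Finset.range (l + 1), (-1) ^ k * (cpd k A).trace := by
  have h : Matrix.det (1 - A) = A.charpoly.eval 1 := by
    rw [Matrix.eval_charpoly]; simp
  rw [h]
  nontriviality R
  rw [Polynomial.eval_eq_sum_range, A.charpoly_natDegree_eq_dim, Fintype.card_fin,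
    ← Finset.sum_range_reflect]
  refine Finset.sum_congr rfl fun k hk => ?_
  have hk' : k ≤ l := by simpa [Nat.lt_succ_iff] using hk
  have := Matrix.charpoly_coeff_eq_sum_minors A k (by simpa using hk')
  rw [Fintype.card_fin] at this
  rw [one_pow, mul_one, show l + 1 - 1 - k = l - k by omega, this]
  congr 1
  rw [Matrix.trace]
  symm
  refine Finset.sum_bij (fun I _ => I.1) ?_ ?_ ?_ ?_
  · intro I _
    have := I.2
    simp [Finset.mem_powersetCard]
  · intro I _ J _ h; exact Subtype.ext h
  · intro s hs
    rw [Finset.mem_powersetCard] at hs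
    exact ⟨⟨s, hs.2⟩, Finset.mem_univ _, rfl⟩
  · intro I _
    simp only [Matrix.diag, cpd, Matrix.of_apply]
    have e : Fin k ≃ (I.1 : Finset (Fin l)) := (I.1.orderIsoOfFin I.2).toEquiv
    have e2 : (fun i => (emb I i)) = Subtype.val ∘ (I.1.orderIsoOfFin I.2) := by
      funext i
      simp [emb, Set.powersetCard.ofFinEmbEquiv]; rfl
    have : A.submatrix (emb I) (emb I) = (A.submatrix (Subtype.val : I.1 → Fin l)
       (Subtype.val : I.1 → Fin l)).submatrix (I.1.orderIsoOfFin I.2).toEquiv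
         (I.1.orderIsoOfFin I.2).toEquiv := by
      rw [Matrix.submatrix_submatrix]
      change A.submatrix (fun i => (emb I i)) (fun i => (emb I i)) = _
      rw [e2]; rfl
    rw [this, Matrix.det_submatrix_equiv_self]

theorem range_emb {l k : ℕ} (I : Set.powersetCard (Fin l) k) (i : Fin l) :
    (∃ j, emb I j = i) ↔ i ∈ I.1 := by
  have e2 : (fun i => (emb I i)) = Subtype.val ∘ (I.1.orderIsoOfFin I.2) := by
      funext i
      simp [emb, Set.powersetCard.ofFinEmbEquiv]; rfl
  constructor
  · rintro ⟨j, rfl⟩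
    have := congrFun e2 j
    simp only [Function.comp] at this
    rw [this]; exact Subtype.property _
  · intro h
    refine ⟨(I.1.orderIsoOfFin I.2).symm ⟨i, h⟩, ?_⟩
    have := congrFun e2 ((I.1.orderIsoOfFin I.2).symm ⟨i, h⟩)
    simpa using this

/-- The matrix with rows `M i`, `i ∉ I` and rows `e_{J_j}` in position `I_j`. -/
def Nmat {R : Type*} [CommRing R] {l k : ℕ} (M : Matrix (Fin l) (Fin l) R)
    (J I : Set.powersetCard (Fin l) k) : Matrix (Fin l) (Fin l) R :=
  Matrix.of fun i => if h : ∃ j, emb I j = i then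
    Pi.single (emb J h.choose) 1 else M i

theorem det_Nmat {R : Type*} [CommRing R] {l k : ℕ} (M M' : Matrix (Fin l) (Fin l) R)
    (hM : M * M' = 1) (J I : Set.powersetCard (Fin l) k) :
    (Nmat M J I).det = M.det * cpd k M' J I := by
  have h1 : (Nmat M J I * M').det = cpd k M' J I := by
    set Q := Nmat M J I * M'
    have hQ1 : ∀ j, Q (emb I j) = M' (emb J j) := by
      intro j
      funext c
      have h : ∃ j', emb I j' = emb I j := ⟨j, rfl⟩
      have h2 : h.choose = j := (emb I).injective h.choose_spec
      simp only [Q, Matrix.mul_apply, Nmat, Matrix.of_apply]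
      rw [dif_pos h, h2]
      simp [Pi.single_apply]
    have hQ2 : ∀ i, i ∉ I.1 → Q i = (1 : Matrix (Fin l) (Fin l) R) i := by
      intro i hi
      rw [← range_emb] at hi
      funext c
      rw [← hM]
      simp only [Q, Matrix.mul_apply, Nmat, Matrix.of_apply]
      rw [dif_neg hi]
    have h3 : Q = Matrix.of (I.1.piecewise (Matrix.row Q) (Matrix.row (1 : Matrix (Fin l) (Fin l) R))) := by
      ext i j
      rw [Matrix.of_apply]
      by_cases hi : i ∈ I.1
      · rw [Finset.piecewise_eq_of_mem _ _ _ hi]; rfl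
      · rw [Finset.piecewise_eq_of_notMem _ _ _ hi]; exact congrFun (hQ2 i hi) j
    rw [h3, Matrix.det_piecewise_one_eq_submatrix_det]
    simp only [cpd, Matrix.of_apply]
    rw [← Matrix.det_submatrix_equiv_self (I.1.orderIsoOfFin I.2).toEquiv]
    have e2 : (fun i => (emb I i)) = Subtype.val ∘ (I.1.orderIsoOfFin I.2) := by
      funext i
      simp [emb, Set.powersetCard.ofFinEmbEquiv]; rfl
    congr 1
    ext a b
    have ha := congrFun e2 a
    have hb := congrFun e2 b
    simp only [Function.comp] at ha hb
    simp only [Matrix.submatrix_apply]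
    rw [hb, ← hQ1, ha]
    rfl
  have h2 : M'.det * M.det = 1 := by rw [mul_comm, ← Matrix.det_mul, hM, Matrix.det_one]
  rw [Matrix.det_mul] at h1
  rw [← h1]
  linear_combination (-(Nmat M J I).det) * h2

abbrev Sx (l : ℕ) := MvPolynomial (Fin l) ℂ

def act {l : ℕ} (A : Matrix (Fin l) (Fin l) ℂ) : Sx l →ₐ[ℂ] Sx l :=
  MvPolynomial.aeval (fun j => ∑ i, MvPolynomial.C (A i j) * MvPolynomial.X i)

theorem act_X {l : ℕ} (A : Matrix (Fin l) (Fin l) ℂ) (j : Fin l) :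
    act A (MvPolynomial.X j) = ∑ i, MvPolynomial.C (A i j) * MvPolynomial.X i := by
  simp [act]

theorem act_C {l : ℕ} (A : Matrix (Fin l) (Fin l) ℂ) (c : ℂ) :
    act A (MvPolynomial.C c) = MvPolynomial.C c := by
  simp [act]

theorem act_one {l : ℕ} : act (1 : Matrix (Fin l) (Fin l) ℂ) = AlgHom.id ℂ _ := by
  apply MvPolynomial.algHom_ext
  intro j
  rw [act_X]
  simp [Matrix.one_apply]

theorem act_mul {l : ℕ} (A B : Matrix (Fin l) (Fin l) ℂ) :
    act (A * B) = (act A).comp (act B) := by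
  apply MvPolynomial.algHom_ext
  intro j
  rw [act_X, AlgHom.comp_apply, act_X, map_sum]
  simp only [map_mul, act_C, act_X, Matrix.mul_apply, map_sum, Finset.sum_mul, Finset.mul_sum]
  rw [Finset.sum_comm]
  refine Finset.sum_congr rfl fun i _ => Finset.sum_congr rfl fun k _ => ?_
  ring

theorem act_mul_apply {l : ℕ} (A B : Matrix (Fin l) (Fin l) ℂ) (p : Sx l) :
    act (A * B) p = act A (act B p) := by
  rw [act_mul]; rfl

theorem act_homog {l : ℕ} (A : Matrix (Fin l) (Fin l) ℂ) {p : Sx l} {n : ℕ}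
    (hp : p.IsHomogeneous n) : (act A p).IsHomogeneous n := by
  have := hp.aeval (fun j => ∑ i, MvPolynomial.C (A i j) * MvPolynomial.X i : Fin l → Sx l) (n := 1)
    (fun j => MvPolynomial.IsHomogeneous.sum _ _ _
      (fun i _ => MvPolynomial.isHomogeneous_C_mul_X _ _))
  simpa [act] using this

theorem act_hc {l : ℕ} (A : Matrix (Fin l) (Fin l) ℂ) (p : Sx l) (n : ℕ) :
    MvPolynomial.homogeneousComponent n (act A p) =
      act A (MvPolynomial.homogeneousComponent n p) := by
  conv_lhs => rw [← MvPolynomial.sum_homogeneousComponent p, map_sum, map_sum]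
  have : ∀ i, MvPolynomial.homogeneousComponent n
      (act A (MvPolynomial.homogeneousComponent i p)) =
      if n = i then act A (MvPolynomial.homogeneousComponent i p) else 0 := by
    intro i
    rw [MvPolynomial.homogeneousComponent_of_mem
      (act_homog A (MvPolynomial.homogeneousComponent_isHomogeneous i p))]
  simp only [this]
  rw [Finset.sum_ite_eq]
  split_ifs with h
  · rfl
  · rw [MvPolynomial.homogeneousComponent_eq_zero, map_zero]
    simp at h; omega

abbrev Sd (l d : ℕ) : Submodule ℂ (Sx l) := MvPolynomial.homogeneousSubmodule (Fin l) ℂ d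

def actd {l : ℕ} (d : ℕ) (A : Matrix (Fin l) (Fin l) ℂ) : Sd l d →ₗ[ℂ] Sd l d :=
  (act A).toLinearMap.restrict (fun _ hp => act_homog A hp)

theorem actd_coe {l : ℕ} (d : ℕ) (A : Matrix (Fin l) (Fin l) ℂ) (p : Sd l d) :
    (actd d A p : Sx l) = act A p := rfl

theorem actd_mul {l : ℕ} (d : ℕ) (A B : Matrix (Fin l) (Fin l) ℂ) :
    actd d (A * B) = actd d A * actd d B := by
  ext1 p; apply Subtype.ext
  exact act_mul_apply _ _ _

theorem actd_one {l : ℕ} (d : ℕ) :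
    actd d (1 : Matrix (Fin l) (Fin l) ℂ) = 1 := by
  ext1 p; apply Subtype.ext
  rw [actd_coe, act_one]; rfl

instance Sd_fin (l d : ℕ) : Module.Finite ℂ (Sd l d) :=
  Module.Finite.iff_fg.mpr (MvPolynomial.homogeneousSubmodule_fg (Fin l) ℂ d)

/-! weighted counting -/

def Wd {ι : Type*} [Fintype ι] [DecidableEq ι] (e : ι → ℕ) (d : ℕ) : Finset (ι →₀ ℕ) :=
  (Finset.finsuppAntidiag Finset.univ d).filter (fun β => ∀ i, e i ∣ β i)

def geo (e : ℕ) (c : ℂ) : PowerSeries ℂ :=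
  PowerSeries.mk fun n => if e ∣ n then c ^ (n / e) else 0

theorem geo_mul (e : ℕ) (he : 0 < e) (c : ℂ) :
    geo e c * (1 - PowerSeries.C c * PowerSeries.X ^ e) = 1 := by
  ext n
  rw [mul_sub, mul_one, map_sub, ← mul_assoc, PowerSeries.coeff_mul_X_pow', PowerSeries.coeff_mul_C,
    PowerSeries.coeff_one]
  simp only [geo, PowerSeries.coeff_mk]
  by_cases h0 : n = 0
  · subst h0; simp; intro h; omega
  · rw [if_neg h0]
    by_cases hn : e ≤ n
    · rw [if_pos hn]
      obtain ⟨k, rfl⟩ := Nat.exists_eq_add_of_le hn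
      simp only [Nat.dvd_add_right (dvd_refl e), Nat.add_sub_cancel_left]
      by_cases hk : e ∣ k
      · rw [if_pos hk, if_pos hk, Nat.add_div_left _ he, pow_succ, sub_self]
      · rw [if_neg hk, if_neg hk]; simp
    · rw [if_neg hn, if_neg (fun h => hn (Nat.le_of_dvd (Nat.pos_of_ne_zero h0) h)), sub_zero]

theorem coeff_prod_geo {ι : Type*} [Fintype ι] [DecidableEq ι] (e : ι → ℕ) (c : ι → ℂ) (d : ℕ) :
    PowerSeries.coeff d (∏ i, geo (e i) (c i)) = ∑ β ∈ Wd e d, ∏ i, c i ^ (β i / e i) := by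
  rw [PowerSeries.coeff_prod, Wd, Finset.sum_filter]
  refine Finset.sum_congr rfl fun β _ => ?_
  split_ifs with h
  · refine Finset.prod_congr rfl fun i _ => ?_
    simp [geo, h i]
  · push Not at h
    obtain ⟨i, hi⟩ := h
    exact Finset.prod_eq_zero (Finset.mem_univ i) (by simp [geo, hi])

theorem exists_basisY {l : ℕ} {ι : Type*} [Fintype ι] [DecidableEq ι] (y : ι → Sx l) (e : ι → ℕ)
    (he : ∀ i, 0 < e i) (hy : ∀ i, (y i).IsHomogeneous (e i)) (hind : AlgebraicIndependent ℂ y)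
    (d : ℕ) (V : Submodule ℂ (Sx l))
    (hV : ∀ p, p ∈ V ↔ p ∈ (MvPolynomial.aeval y : MvPolynomial ι ℂ →ₐ[ℂ] Sx l).range ∧
      p.IsHomogeneous d) :
    ∃ b : Module.Basis (Wd e d) ℂ V, ∀ β, (b β : Sx l) = ∏ i, y i ^ (β.1 i / e i) := by
  have hh : ∀ α : ι →₀ ℕ, (∏ i, y i ^ (α i)).IsHomogeneous (∑ i, e i * α i) := fun α =>
    MvPolynomial.IsHomogeneous.prod _ _ _ (fun i _ => (hy i).pow _)
  have hsum : ∀ β ∈ Wd e d, ∑ i, e i * (β i / e i) = d := by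
    intro β hβ
    rw [Wd, Finset.mem_filter, Finset.mem_finsuppAntidiag] at hβ
    rw [← hβ.1.1]
    exact Finset.sum_congr rfl fun i _ => Nat.mul_div_cancel' (hβ.2 i)
  have haev : ∀ α : ι →₀ ℕ, MvPolynomial.aeval y (MvPolynomial.monomial α (1:ℂ)) =
      ∏ i, y i ^ (α i) := by
    intro α
    rw [MvPolynomial.aeval_monomial, map_one, one_mul, Finsupp.prod_fintype _ _ (by simp)]
  let red : Wd e d → (ι →₀ ℕ) := fun β => Finsupp.equivFunOnFinite.symm (fun i => β.1 i / e i)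
  have hred : Function.Injective red := by
    intro β β' h
    apply Subtype.ext
    ext i
    have h1 := DFunLike.congr_fun h i
    have hb := (Finset.mem_filter.mp β.2).2 i
    have hb' := (Finset.mem_filter.mp β'.2).2 i
    simp only [red, Finsupp.equivFunOnFinite_symm_apply_apply] at h1
    exact (Nat.div_left_inj hb hb').mp h1
  let v : Wd e d → V := fun β => ⟨∏ i, y i ^ (β.1 i / e i), (hV _).mpr
    ⟨⟨MvPolynomial.monomial (red β) 1, by
      have := haev (red β)
      simpa [red] using this⟩, by
      have := hh (red β)
      have e1 : ∑ i, e i * red β i = d := by simpa [red] using hsum β.1 β.2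
      rw [e1] at this
      simpa [red] using this⟩⟩
  have hli : LinearIndependent ℂ v := by
    apply LinearIndependent.of_comp V.subtype
    have h1 : LinearIndependent ℂ (fun β : Wd e d => MvPolynomial.basisMonomials ι ℂ (red β)) :=
      (MvPolynomial.basisMonomials ι ℂ).linearIndependent.comp _ hred
    have h2 := h1.map' (MvPolynomial.aeval y : MvPolynomial ι ℂ →ₐ[ℂ] Sx l).toLinearMap
      (LinearMap.ker_eq_bot.mpr hind)
    have hv : (V.subtype ∘ v) = ((MvPolynomial.aeval y : MvPolynomial ι ℂ →ₐ[ℂ] Sx l).toLinearMap ∘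
        fun β : Wd e d => MvPolynomial.basisMonomials ι ℂ (red β)) := by
      funext β
      simp only [Function.comp, MvPolynomial.coe_basisMonomials, AlgHom.toLinearMap_apply]
      rw [haev]
      simp [v, red]
    rw [hv]
    exact h2
  have hsp : ⊤ ≤ Submodule.span ℂ (Set.range v) := by
    intro p _
    obtain ⟨⟨P, hP⟩, hp⟩ := (hV p.1).mp p.2
    have h1 : (p : Sx l) ∈ Submodule.map V.subtype (Submodule.span ℂ (Set.range v)) := by
      have h2 : (p : Sx l) = MvPolynomial.homogeneousComponent d (p : Sx l) :=
        (MvPolynomial.homogeneousComponent_eq_self hp).symm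
      have hP' : (MvPolynomial.aeval y) P = (p : Sx l) := hP
      rw [h2, ← hP', MvPolynomial.as_sum P, map_sum, map_sum]
      apply Submodule.sum_mem
      intro α _
      have h3 : MvPolynomial.monomial α (MvPolynomial.coeff α P) =
        (MvPolynomial.coeff α P) • MvPolynomial.monomial α (1:ℂ) := by
        rw [MvPolynomial.smul_monomial, smul_eq_mul, mul_one]
      rw [h3, map_smul, map_smul]
      apply Submodule.smul_mem
      rw [haev, MvPolynomial.homogeneousComponent_of_mem (hh α)]
      split_ifs with h4
      · have hmem : Finsupp.equivFunOnFinite.symm (fun i => e i * α i) ∈ Wd e d := by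
          rw [Wd, Finset.mem_filter, Finset.mem_finsuppAntidiag]
          refine ⟨⟨by simp [h4], by simp⟩, fun i => by simp⟩
        refine ⟨v ⟨_, hmem⟩, Submodule.subset_span ⟨_, rfl⟩, ?_⟩
        simp [v, Nat.mul_div_cancel_left _ (he _)]
      · exact zero_mem _
    obtain ⟨q, hq, hqp⟩ := h1
    have : q = p := Subtype.ext hqp
    rwa [← this]
  exact ⟨Module.Basis.mk hli hsp, fun β => by simp [v]⟩

theorem trace_of_eigenbasis {V ι : Type*} [AddCommGroup V] [Module ℂ V] [Fintype ι]
    [DecidableEq ι] (b : Module.Basis ι ℂ V) (T : V →ₗ[ℂ] V) (c : ι → ℂ)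
    (h : ∀ i, T (b i) = c i • b i) : LinearMap.trace ℂ V T = ∑ i, c i := by
  rw [LinearMap.trace_eq_matrix_trace ℂ b, Matrix.trace]
  refine Finset.sum_congr rfl fun i _ => ?_
  simp [LinearMap.toMatrix_apply, h]

theorem molien_diag {l : ℕ} (c : Fin l → ℂ) (d : ℕ) :
    LinearMap.trace ℂ _ (actd d (Matrix.diagonal c)) =
      PowerSeries.coeff d (∏ i, geo 1 (c i)) := by
  obtain ⟨b, hb⟩ := exists_basisY (MvPolynomial.X : Fin l → Sx l) (fun _ => 1) (by simp)
    (fun i => MvPolynomial.isHomogeneous_X _ _) (MvPolynomial.algebraicIndependent_X _ _) d (Sd l d)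
    (fun p => by
      rw [MvPolynomial.mem_homogeneousSubmodule]
      refine ⟨fun h => ⟨⟨p, ?_⟩, h⟩, fun h => h.2⟩
      change MvPolynomial.aeval MvPolynomial.X p = p
      simp)
  rw [coeff_prod_geo, trace_of_eigenbasis b _ (fun β => ∏ i, c i ^ (β.1 i / 1))]
  · exact Finset.sum_coe_sort (Wd (fun _ => 1) d) (fun β => ∏ i, c i ^ (β i / 1))
  · intro β
    apply Subtype.ext
    rw [actd_coe, hb, Submodule.coe_smul, hb, map_prod]
    have : ∀ i, act (Matrix.diagonal c) (MvPolynomial.X i) = c i • MvPolynomial.X i := by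
      intro i
      rw [act_X, Finset.sum_eq_single i]
      · rw [Matrix.diagonal_apply_eq, MvPolynomial.smul_eq_C_mul]
      · intro j _ hj; rw [Matrix.diagonal_apply_ne _ hj]; simp
      · simp
    simp only [map_pow, this, smul_pow]
    rw [Finset.prod_smul]

theorem exists_diag {l : ℕ} (A : Matrix (Fin l) (Fin l) ℂ) (N : ℕ) (hN : 0 < N) (hA : A ^ N = 1) :
    ∃ (P Q : Matrix (Fin l) (Fin l) ℂ) (c : Fin l → ℂ), P * Q = 1 ∧ Q * P = 1 ∧
      A = P * Matrix.diagonal c * Q := by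
  set f : Module.End ℂ (Fin l → ℂ) := Matrix.toLin' A
  have hf : f.IsSemisimple := by
    apply Module.End.isSemisimple_of_squarefree_aeval_eq_zero
      (p := (Polynomial.X ^ N - 1 : Polynomial ℂ))
    · apply Polynomial.Separable.squarefree
      apply Polynomial.separable_X_pow_sub_C 1 _ one_ne_zero
      exact_mod_cast hN.ne'
    · have : f ^ N = 1 := by
        rw [← Matrix.toLin'_pow, hA, Matrix.toLin'_one]; rfl
      simp [this]
  have htop := hf.iSup_eigenspace_eq_top
  set s : Set (Fin l → ℂ) := {v | ∃ μ : ℂ, f v = μ • v}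
  have hs : ⊤ ≤ Submodule.span ℂ s := by
    rw [← htop]
    apply iSup_le
    intro μ v hv
    exact Submodule.subset_span ⟨μ, Module.End.mem_eigenspace_iff.mp hv⟩
  let b := Module.Basis.ofSpan hs
  have hbs : Set.range b ⊆ s := Module.Basis.ofSpan_subset hs
  haveI : Fintype ((linearIndepOn_empty ℂ id).extend (Set.empty_subset s)) :=
    FiniteDimensional.fintypeBasisIndex b
  have hcard := Module.finrank_eq_card_basis b
  rw [Module.finrank_fin_fun] at hcard
  let b' := b.reindex (Fintype.equivFinOfCardEq hcard.symm)
  have hb' : ∀ i, ∃ μ : ℂ, f (b' i) = μ • b' i := by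
    intro i
    exact hbs (by simp [b'])
  choose c hc using hb'
  let e := Pi.basisFun ℂ (Fin l)
  refine ⟨e.toMatrix b', b'.toMatrix e, c, ?_, ?_, ?_⟩
  · exact Module.Basis.toMatrix_mul_toMatrix_flip _ _
  · exact Module.Basis.toMatrix_mul_toMatrix_flip _ _
  · have h1 : LinearMap.toMatrix b' b' f = Matrix.diagonal c := by
      ext i j
      rw [LinearMap.toMatrix_apply, hc, map_smul, Module.Basis.repr_self]
      by_cases h : i = j
      · subst h; simp
      · simp [Finsupp.single_apply, h, Ne.symm h]
    rw [← h1, basis_toMatrix_mul_linearMap_toMatrix_mul_basis_toMatrix]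
    simp [e, f, LinearMap.toMatrix_eq_toMatrix']

theorem molien {l : ℕ} (A : Matrix (Fin l) (Fin l) ℂ) (N : ℕ) (hN : 0 < N) (hA : A ^ N = 1) :
    (PowerSeries.mk fun d => LinearMap.trace ℂ _ (actd d A)) *
      (A.charpolyRev : PowerSeries ℂ) = 1 := by
  obtain ⟨P, Q, c, hPQ, hQP, rfl⟩ := exists_diag A N hN hA
  have h1 : ∀ d, LinearMap.trace ℂ _ (actd d (P * Matrix.diagonal c * Q)) =
      PowerSeries.coeff d (∏ i, geo 1 (c i)) := by
    intro d
    rw [← molien_diag, actd_mul, LinearMap.trace_mul_comm, actd_mul, ← mul_assoc, ← actd_mul, hQP,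
      actd_one, one_mul]
  have h2 : (PowerSeries.mk fun d => LinearMap.trace ℂ _ (actd d (P * Matrix.diagonal c * Q))) =
      ∏ i, geo 1 (c i) := by
    ext d; rw [PowerSeries.coeff_mk, h1]
  have h3 : (P * Matrix.diagonal c * Q).charpolyRev =
      ∏ i, (1 - Polynomial.C (c i) * Polynomial.X) := by
    rw [← Matrix.reverse_charpoly]
    have : (P * Matrix.diagonal c * Q).charpoly = (Matrix.diagonal c).charpoly := by
      rw [Matrix.charpoly_mul_comm, ← mul_assoc, hQP, one_mul]
    rw [this, Matrix.reverse_charpoly, Matrix.charpolyRev]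
    have : (1 - (Polynomial.X : Polynomial ℂ) • (Matrix.diagonal c).map Polynomial.C) =
      Matrix.diagonal (fun i => 1 - Polynomial.C (c i) * Polynomial.X) := by
      ext i j : 1
      by_cases h : i = j
      · subst h; simp [Polynomial.X_mul_C]
      · simp [h]
    rw [this, Matrix.det_diagonal]
  rw [h2, h3]
  have h4 : ((∏ i, (1 - Polynomial.C (c i) * Polynomial.X) : Polynomial ℂ) : PowerSeries ℂ) =
      ∏ i, (1 - PowerSeries.C (c i) * PowerSeries.X ^ 1) := by
    rw [← Polynomial.coeToPowerSeries.ringHom_apply, map_prod]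
    simp
  rw [h4, ← Finset.prod_mul_distrib]
  exact Finset.prod_eq_one fun i _ => geo_mul 1 one_pos _

theorem hc_mul {l : ℕ} {f : Sx l} {e : ℕ} (hf : f.IsHomogeneous e) (q : Sx l) (n : ℕ) :
    MvPolynomial.homogeneousComponent n (q * f) =
      if e ≤ n then MvPolynomial.homogeneousComponent (n - e) q * f else 0 := by
  conv_lhs => rw [← MvPolynomial.sum_homogeneousComponent q, Finset.sum_mul, map_sum]
  have : ∀ i, MvPolynomial.homogeneousComponent n
      (MvPolynomial.homogeneousComponent i q * f) =
      if n = i + e then MvPolynomial.homogeneousComponent i q * f else 0 := by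
    intro i
    rw [MvPolynomial.homogeneousComponent_of_mem
      ((MvPolynomial.homogeneousComponent_isHomogeneous i q).mul hf)]
  simp only [this]
  split_ifs with h
  · have h2 : ∀ i, (n = i + e) ↔ (n - e = i) := by intro i; omega
    simp only [h2]
    rw [Finset.sum_ite_eq]
    split_ifs with h3
    · rfl
    · rw [MvPolynomial.homogeneousComponent_eq_zero, zero_mul]
      simp at h3; omega
  · apply Finset.sum_eq_zero
    intro i _
    rw [if_neg (by omega)]

section inv
variable {G : Type} [Group G] [Fintype G] {l : ℕ} (A : G →* Matrix (Fin l) (Fin l) ℂ)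

def IsInv (p : Sx l) : Prop := ∀ g, act (A g) p = p

def avg : Sx l →ₗ[ℂ] Sx l := (Fintype.card G : ℂ)⁻¹ • ∑ g, (act (A g)).toLinearMap

theorem avg_apply (p : Sx l) : avg A p = (Fintype.card G : ℂ)⁻¹ • ∑ g, act (A g) p := by
  simp [avg]

theorem avg_inv (p : Sx l) : IsInv A (avg A p) := by
  intro g
  rw [avg_apply, map_smul, map_sum]
  rw [Fintype.sum_equiv (Equiv.mulLeft g) (fun x => act (A g) (act (A x) p))
    (fun x => act (A x) p)
    (fun x => by rw [← act_mul_apply, ← map_mul, Equiv.coe_mulLeft])]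

theorem avg_mul {p : Sx l} (hp : IsInv A p) (h : Sx l) : avg A (h * p) = avg A h * p := by
  rw [avg_apply, avg_apply, smul_mul_assoc, Finset.sum_mul]
  simp only [map_mul, hp _]

theorem avg_of_inv {p : Sx l} (hp : IsInv A p) : avg A p = p := by
  rw [avg_apply]
  simp only [hp _, Finset.sum_const, Finset.card_univ]
  rw [← Nat.cast_smul_eq_nsmul ℂ, smul_smul, inv_mul_cancel₀, one_smul]
  exact_mod_cast Fintype.card_ne_zero

theorem inv_hc {p : Sx l} (hp : IsInv A p) (n : ℕ) :
    IsInv A (MvPolynomial.homogeneousComponent n p) := by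
  intro g; rw [← act_hc, hp g]

def invIdeal : Ideal (Sx l) := Ideal.span {f | (∃ d, 0 < d ∧ f.IsHomogeneous d) ∧ IsInv A f}

theorem invIdeal_stable (g : G) {p : Sx l} (hp : p ∈ invIdeal A) : act (A g) p ∈ invIdeal A := by
  have : invIdeal A ≤ (invIdeal A).comap (act (A g)).toRingHom := by
    apply Ideal.span_le.mpr
    intro f hf
    change act (A g) f ∈ invIdeal A
    rw [hf.2 g]
    exact Ideal.subset_span hf
  exact this hp

theorem mem_invIdeal {p : Sx l} (hp : IsInv A p) :
    p - MvPolynomial.C (MvPolynomial.coeff 0 p) ∈ invIdeal A := by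
  rw [← MvPolynomial.homogeneousComponent_zero]
  have hps := MvPolynomial.sum_homogeneousComponent p
  rw [Finset.sum_range_succ'] at hps
  nth_rw 1 [← hps]
  rw [add_sub_cancel_right]
  apply Submodule.sum_mem
  intro i _
  exact Ideal.subset_span ⟨⟨i+1, by omega, MvPolynomial.homogeneousComponent_isHomogeneous _ _⟩,
      inv_hc A hp _⟩

theorem act_td (B : Matrix (Fin l) (Fin l) ℂ) (p : Sx l) :
    (act B p).totalDegree ≤ p.totalDegree := by
  conv_lhs => rw [← MvPolynomial.sum_homogeneousComponent p, map_sum]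
  apply MvPolynomial.totalDegree_finsetSum_le
  intro i hi
  refine (act_homog B (MvPolynomial.homogeneousComponent_isHomogeneous i p)).totalDegree_le.trans ?_
  simp at hi; omega

def linf (u : Fin l → ℂ) : Sx l := ∑ i, MvPolynomial.C (u i) * MvPolynomial.X i

theorem linf_ne {u : Fin l → ℂ} (hu : u ≠ 0) : linf u ≠ 0 := by
  intro h
  apply hu
  funext i
  have := congrArg (MvPolynomial.coeff (Finsupp.single i 1)) h
  rw [linf, MvPolynomial.coeff_sum] at this
  simpa [MvPolynomial.coeff_C_mul, MvPolynomial.coeff_X, Finsupp.single_left_inj] using this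

theorem linf_dvd (u w : Fin l → ℂ) (h : Sx l) :
    linf u ∣ act (1 - Matrix.vecMulVec u w) h - h := by
  induction h using MvPolynomial.induction_on with
  | C a => rw [act_C, sub_self]; exact dvd_zero _
  | add p q hp hq =>
    rw [map_add, add_sub_add_comm]; exact dvd_add hp hq
  | mul_X p j hp =>
    have h1 : act (1 - Matrix.vecMulVec u w) (MvPolynomial.X j) - MvPolynomial.X j =
        linf u * (- MvPolynomial.C (w j)) := by
      rw [act_X, linf]
      simp only [Matrix.sub_apply, Matrix.vecMulVec_apply, map_sub, sub_mul,
        Finset.sum_sub_distrib, map_mul, Finset.sum_mul]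
      have : ∑ x, MvPolynomial.C ((1 : Matrix (Fin l) (Fin l) ℂ) x j) * MvPolynomial.X x =
        (MvPolynomial.X j : Sx l) := by
        simp [Matrix.one_apply]
      rw [this, sub_sub_cancel_left, ← Finset.sum_neg_distrib]
      exact Finset.sum_congr rfl fun i _ => by ring
    have h2 : act (1 - Matrix.vecMulVec u w) (p * MvPolynomial.X j) - p * MvPolynomial.X j =
      (act (1 - Matrix.vecMulVec u w) p - p) * act (1 - Matrix.vecMulVec u w) (MvPolynomial.X j)
      + p * (act (1 - Matrix.vecMulVec u w) (MvPolynomial.X j) - MvPolynomial.X j) := by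
      rw [map_mul]; ring
    rw [h2, h1]
    exact dvd_add (hp.mul_right _) ((Dvd.intro _ rfl).mul_left _)

theorem linf_div (u w : Fin l → ℂ) (hu : u ≠ 0) (h : Sx l) :
    ∃ D : Sx l, act (1 - Matrix.vecMulVec u w) h - h = linf u * D ∧
      (D = 0 ∨ D.totalDegree < h.totalDegree) := by
  obtain ⟨D, hD⟩ := linf_dvd u w h
  refine ⟨D, hD, ?_⟩
  by_cases h0 : D = 0
  · exact Or.inl h0
  right
  have h1 : (linf u * D).totalDegree = (linf u).totalDegree + D.totalDegree :=
    MvPolynomial.totalDegree_mul_of_isDomain (linf_ne hu) h0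
  have h2 : (linf u).totalDegree = 1 := by
    apply MvPolynomial.IsHomogeneous.totalDegree _ (linf_ne hu)
    exact MvPolynomial.IsHomogeneous.sum _ _ _ fun i _ => MvPolynomial.isHomogeneous_C_mul_X _ _
  have h3 : (linf u * D).totalDegree ≤ h.totalDegree := by
    rw [← hD]
    refine (MvPolynomial.totalDegree_sub _ _).trans (max_le (act_td _ _) le_rfl)
  omega

def ReflGen : Prop := Subgroup.closure
  {g : G | ∃ u w : Fin l → ℂ, u ≠ 0 ∧ A g = 1 - Matrix.vecMulVec u w} = ⊤

theorem key {ι : Type} [Fintype ι] (hA : ReflGen A) (p : ι → Sx l) (hp : ∀ i, IsInv A (p i))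
    (μ : Fin l →₀ ℕ) (hμ : ∀ i ν, Finsupp.degree ν < Finsupp.degree μ → (p i).coeff ν = 0)
    (n : ℕ) : ∀ h : ι → Sx l, (∀ i, h i = 0 ∨ (h i).totalDegree < n) → ∑ i, h i * p i = 0 →
    ∑ i, (p i).coeff μ • h i ∈ invIdeal A := by
  induction n with
  | zero =>
    intro h hh _
    have : ∀ i, h i = 0 := fun i => (hh i).resolve_right (by omega)
    simp [this]
  | succ n ih =>
    intro h hh hs
    set H := ∑ i, (p i).coeff μ • h i with hH
    have h1 : ∀ g : G, act (A g) H - H ∈ invIdeal A := by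
      have hsub : ∀ g ∈ Subgroup.closure
          {g : G | ∃ u w : Fin l → ℂ, u ≠ 0 ∧ A g = 1 - Matrix.vecMulVec u w},
          act (A g) H - H ∈ invIdeal A := by
        intro g hg
        induction hg using Subgroup.closure_induction with
        | mem g hg =>
          obtain ⟨u, w, hu, hg'⟩ := hg
          choose D hD hD' using fun i => linf_div u w hu (h i)
          have h2 : act (A g) H - H = linf u * ∑ i, (p i).coeff μ • D i := by
            rw [hH, map_sum, ← Finset.sum_sub_distrib, Finset.mul_sum]
            refine Finset.sum_congr rfl fun i _ => ?_
            rw [map_smul, ← smul_sub, hg', hD, mul_smul_comm]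
          rw [h2]
          apply Ideal.mul_mem_left
          apply ih
          · intro i
            rcases hD' i with h3 | h3
            · exact Or.inl h3
            · rcases hh i with h4 | h4
              · left
                rw [h4] at h3; simp at h3
              · right; omega
          · have h5 : linf u * ∑ i, D i * p i = 0 := by
              have : ∑ i, (act (A g) (h i) - h i) * p i = act (A g) (∑ i, h i * p i) -
                  ∑ i, h i * p i := by
                rw [map_sum, ← Finset.sum_sub_distrib]
                refine Finset.sum_congr rfl fun i _ => ?_
                rw [map_mul, hp i g]; ring
              rw [hs, map_zero, sub_zero] at this
              rw [← this, Finset.mul_sum]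
              refine Finset.sum_congr rfl fun i _ => ?_
              rw [hg', hD]; ring
            exact (mul_eq_zero.mp h5).resolve_left (linf_ne hu)
        | one => rw [map_one, act_one]; simp
        | mul x y _ _ hx hy =>
          have : act (A (x * y)) H - H = act (A x) (act (A y) H - H) + (act (A x) H - H) := by
            rw [map_mul, act_mul_apply, map_sub]; ring
          rw [this]
          exact add_mem (invIdeal_stable A x hy) hx
        | inv x _ hx =>
          have : act (A x⁻¹) H - H = - act (A x⁻¹) (act (A x) H - H) := by
            rw [map_sub, ← act_mul_apply, ← map_mul, inv_mul_cancel, map_one, act_one]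
            simp
          rw [this]
          exact neg_mem (invIdeal_stable A _ hx)
      intro g
      apply hsub
      rw [hA]; trivial
    have h2 : avg A H - H ∈ invIdeal A := by
      have : avg A H - H = MvPolynomial.C ((Fintype.card G : ℂ)⁻¹) * ∑ g, (act (A g) H - H) := by
        rw [avg_apply, Finset.sum_sub_distrib, mul_sub, MvPolynomial.C_mul', MvPolynomial.C_mul']
        congr 1
        simp only [Finset.sum_const, Finset.card_univ]
        rw [← Nat.cast_smul_eq_nsmul ℂ, smul_smul, inv_mul_cancel₀, one_smul]
        exact_mod_cast Fintype.card_ne_zero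
      rw [this]
      exact Ideal.mul_mem_left _ _ (Submodule.sum_mem _ fun g _ => h1 g)
    have h3 : ∑ i, avg A (h i) * p i = 0 := by
      simp only [← avg_mul A (hp _)]
      rw [← map_sum, hs, map_zero]
    have h4 : ∀ i, MvPolynomial.coeff μ (avg A (h i) * p i) =
        MvPolynomial.coeff 0 (avg A (h i)) * MvPolynomial.coeff μ (p i) := by
      intro i
      classical
      rw [MvPolynomial.coeff_mul, Finset.sum_eq_single (0, μ)]
      · rintro ⟨a, b⟩ hab hne
        rw [Finset.HasAntidiagonal.mem_antidiagonal] at hab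
        simp only at hab ⊢
        rw [hμ i b, mul_zero]
        rw [← hab, map_add]
        have : a ≠ 0 := by
          rintro rfl
          apply hne
          rw [← hab, zero_add]
        have : Finsupp.degree a ≠ 0 := by
          rwa [Ne, Finsupp.degree_eq_zero_iff]
        omega
      · intro h; simp at h
    have h5 : ∑ i, (p i).coeff μ * MvPolynomial.coeff 0 (avg A (h i)) = 0 := by
      have := congrArg (MvPolynomial.coeff μ) h3
      rw [MvPolynomial.coeff_sum, MvPolynomial.coeff_zero] at this
      rw [← this]
      exact Finset.sum_congr rfl fun i _ => by rw [h4]; ring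
    have h6 : avg A H ∈ invIdeal A := by
      have : avg A H = ∑ i, (p i).coeff μ • (avg A (h i) -
          MvPolynomial.C (MvPolynomial.coeff 0 (avg A (h i)))) := by
        simp only [smul_sub]
        rw [Finset.sum_sub_distrib, hH, map_sum]
        have : ∑ i, (p i).coeff μ • (MvPolynomial.C (MvPolynomial.coeff 0 (avg A (h i))) : Sx l)
            = 0 := by
          simp only [MvPolynomial.smul_eq_C_mul, ← MvPolynomial.C_mul]
          rw [← map_sum, h5, map_zero]
        rw [this, sub_zero]
        simp
      rw [this]
      apply Submodule.sum_mem
      intro i _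
      rw [MvPolynomial.smul_eq_C_mul]
      exact Ideal.mul_mem_left _ _ (mem_invIdeal A (avg_inv A _))
    have := sub_mem h6 h2
    simpa using this

end inv

section inv
variable {G : Type} [Group G] [Fintype G] {l : ℕ} (A : G →* Matrix (Fin l) (Fin l) ℂ)

theorem exists_mingen : ∃ (ι : Type) (_ : Fintype ι) (_ : DecidableEq ι)
    (f : ι → Sx l) (e : ι → ℕ),
    (∀ i, 0 < e i) ∧ (∀ i, (f i).IsHomogeneous (e i)) ∧ (∀ i, IsInv A (f i)) ∧
    invIdeal A = Ideal.span (Set.range f) ∧ ∀ i, f i ∉ Ideal.span (f '' {j | j ≠ i}) := by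
  classical
  set s : Set (Sx l) := {f | (∃ d, 0 < d ∧ f.IsHomogeneous d) ∧ IsInv A f} with hs
  have hfg : (Submodule.span (Sx l) s).FG := IsNoetherian.noetherian _
  have hex : ∃ n, ∃ T : Finset (Sx l), ↑T ⊆ s ∧ Ideal.span s = Ideal.span (T : Set (Sx l)) ∧
      T.card = n := by
    obtain ⟨T, h1, h2⟩ := (Submodule.fg_span_iff_fg_span_finset_subset s).mp hfg
    exact ⟨_, T, h1, h2, rfl⟩
  obtain ⟨T, h1, h2, h3⟩ := Nat.find_spec hex
  have hd : ∀ i : T, ∃ d, 0 < d ∧ (i : Sx l).IsHomogeneous d := fun i => (h1 i.2).1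
  choose e he he' using hd
  let ι := Fin (Fintype.card T)
  let eq : ι ≃ T := (Fintype.equivFin T).symm
  refine ⟨ι, inferInstance, inferInstance, fun i => (eq i : Sx l), fun i => e (eq i),
    fun i => he _, fun i => he' _, fun i => (h1 (eq i).2).2, ?_, ?_⟩
  · have : Set.range (fun i => (eq i : Sx l)) = (T : Set (Sx l)) := by
      ext x; constructor
      · rintro ⟨i, rfl⟩; exact (eq i).2
      · intro hx; exact ⟨eq.symm ⟨x, hx⟩, by simp⟩
    rw [this, ← h2]; rfl
  · intro i hi
    have h4 : Ideal.span s = Ideal.span ((T.erase (eq i) : Finset (Sx l)) : Set (Sx l)) := by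
      apply le_antisymm
      · rw [h2]
        apply Ideal.span_le.mpr
        intro x hx
        by_cases hxi : x = eq i
        · rw [hxi]
          refine Ideal.span_mono ?_ hi
          rintro _ ⟨j, hj, rfl⟩
          rw [Finset.mem_coe, Finset.mem_erase]
          refine ⟨fun h => hj (eq.injective (Subtype.ext h)), (eq j).2⟩
        · exact Ideal.subset_span (Finset.mem_coe.mpr (Finset.mem_erase.mpr ⟨hxi, hx⟩))
      · exact Ideal.span_mono (fun x hx => h1 (Finset.mem_of_mem_erase hx))
    have h5 : (T.erase (eq i : Sx l)).card < T.card := Finset.card_erase_lt_of_mem (eq i).2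
    exact Nat.find_min hex (by rw [h3] at h5; exact h5)
      ⟨T.erase (eq i), fun x hx => h1 (Finset.mem_of_mem_erase hx), h4, rfl⟩

variable {ι : Type} [Fintype ι] [DecidableEq ι] {f : ι → Sx l} {e : ι → ℕ}

theorem df_indep (hA : ReflGen A) (he : ∀ i, 0 < e i) (hf : ∀ i, (f i).IsHomogeneous (e i))
    (hI : invIdeal A = Ideal.span (Set.range f))
    (hmin : ∀ i, f i ∉ Ideal.span (f '' {j | j ≠ i}))
    (p : ι → Sx l) (hp : ∀ i, IsInv A (p i))
    (hs : ∀ k, ∑ i, MvPolynomial.pderiv k (f i) * p i = 0) : ∀ i, p i = 0 := by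
  classical
  by_contra hne
  push Not at hne
  have hex : ∃ n, ∃ (i : ι) (μ : Fin l →₀ ℕ), (p i).coeff μ ≠ 0 ∧ Finsupp.degree μ = n := by
    obtain ⟨i, hi⟩ := hne
    obtain ⟨μ, hμ⟩ := MvPolynomial.ne_zero_iff.mp hi
    exact ⟨_, i, μ, hμ, rfl⟩
  obtain ⟨i0, μ, hμ, hn⟩ := Nat.find_spec hex
  have hlow : ∀ i ν, Finsupp.degree ν < Finsupp.degree μ → (p i).coeff ν = 0 := by
    intro i ν hν
    by_contra hc
    exact Nat.find_min hex (by rw [← hn]; exact hν) ⟨i, ν, hc, rfl⟩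
  have h1 : ∀ k, ∑ i, (p i).coeff μ • MvPolynomial.pderiv k (f i) ∈ Ideal.span (Set.range f) := by
    intro k
    rw [← hI]
    obtain ⟨N, hN⟩ := (Finset.univ.image fun i => (MvPolynomial.pderiv k (f i)).totalDegree).bddAbove
    apply key A hA p hp μ hlow (N + 1) _ _ (hs k)
    intro i; right
    have := hN (Finset.mem_coe.mpr (Finset.mem_image_of_mem _ (Finset.mem_univ i)))
    exact Nat.lt_succ_of_le this
  have h2 : ∀ k, ∃ b : ι → Sx l, ∑ j, b j * f j =
      ∑ i, (p i).coeff μ • MvPolynomial.pderiv k (f i) := by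
    intro k
    exact Ideal.mem_span_range_iff_exists_fun.mp (h1 k)
  choose b hb using h2
  let B : ι → Sx l := fun j => ∑ k, MvPolynomial.X k * b k j
  have hB : ∀ j, MvPolynomial.coeff 0 (B j) = 0 := by
    intro j
    rw [MvPolynomial.coeff_sum]
    apply Finset.sum_eq_zero
    intro k _
    simp [MvPolynomial.coeff_X_mul']
  have h3 : ∑ j, B j * f j = ∑ i, ((p i).coeff μ * e i) • f i := by
    have h4 : ∑ j, B j * f j = ∑ k, MvPolynomial.X k * ∑ j, b k j * f j := by
      simp only [B, Finset.sum_mul, Finset.mul_sum]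
      rw [Finset.sum_comm]
      exact Finset.sum_congr rfl fun k _ => Finset.sum_congr rfl fun j _ => by ring
    rw [h4]
    simp only [hb, Finset.mul_sum]
    rw [Finset.sum_comm]
    refine Finset.sum_congr rfl fun i _ => ?_
    simp only [mul_smul_comm]
    rw [← Finset.smul_sum, (hf i).sum_X_mul_pderiv, ← Nat.cast_smul_eq_nsmul ℂ, smul_smul]
  set q : Sx l := MvPolynomial.C ((p i0).coeff μ * e i0) - B i0 with hq
  set I' := Ideal.span (f '' {j | j ≠ i0}) with hI'
  have h5 : q * f i0 ∈ I' := by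
    have h6 : q * f i0 = ∑ j ∈ Finset.univ.erase i0,
        (B j - MvPolynomial.C ((p j).coeff μ * e j)) * f j := by
      rw [← sub_eq_zero, Finset.sum_erase_eq_sub (Finset.mem_univ _)]
      have h7 : ∑ j, (B j - MvPolynomial.C ((p j).coeff μ * e j)) * f j = 0 := by
        simp only [sub_mul]
        rw [Finset.sum_sub_distrib, h3]
        simp only [MvPolynomial.smul_eq_C_mul, sub_self]
      rw [h7, hq]; ring
    rw [h6]
    apply Submodule.sum_mem
    intro j hj
    exact Ideal.mul_mem_left _ _ (Ideal.subset_span ⟨j, (Finset.mem_erase.mp hj).1, rfl⟩)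
  have h7 : MvPolynomial.homogeneousComponent (e i0) (q * f i0) ∈ I' := by
    apply MvPolynomial.homogeneousComponent_mem_of_mem _ h5
    letI : GradedAlgebra (MvPolynomial.homogeneousSubmodule (Fin l) ℂ) := MvPolynomial.gradedAlgebra
    apply Ideal.homogeneous_span
    rintro _ ⟨j, _, rfl⟩
    exact ⟨e j, hf j⟩
  rw [hc_mul (hf i0), if_pos le_rfl, Nat.sub_self, MvPolynomial.homogeneousComponent_zero] at h7
  have h8 : MvPolynomial.coeff 0 q = (p i0).coeff μ * e i0 := by
    rw [hq, MvPolynomial.coeff_sub, hB, sub_zero, MvPolynomial.coeff_C, if_pos rfl]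
  rw [h8] at h7
  apply hmin i0
  have h9 : (p i0).coeff μ * e i0 ≠ 0 := mul_ne_zero hμ (by exact_mod_cast (he i0).ne')
  have := Ideal.mul_mem_left I' (MvPolynomial.C ((p i0).coeff μ * e i0)⁻¹) h7
  rwa [← mul_assoc, ← MvPolynomial.C_mul, inv_mul_cancel₀ h9, MvPolynomial.C_1, one_mul] at this

theorem pderiv_aeval (f : ι → Sx l) (P : MvPolynomial ι ℂ) (k : Fin l) :
    MvPolynomial.pderiv k (MvPolynomial.aeval f P) =
      ∑ i, MvPolynomial.pderiv k (f i) * MvPolynomial.aeval f (MvPolynomial.pderiv i P) := by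
  induction P using MvPolynomial.induction_on with
  | C a => simp
  | add p q hp hq => 
    simp only [map_add, hp, hq, mul_add, Finset.sum_add_distrib]
  | mul_X p j hp =>
    simp only [map_mul, MvPolynomial.pderiv_mul, hp, MvPolynomial.aeval_X, map_add, mul_add,
      Finset.sum_add_distrib, Finset.sum_mul]
    congr 1
    · exact Finset.sum_congr rfl fun i _ => by ring
    · rw [Finset.sum_eq_single j]
      · simp; ring
      · intro i _ hij; rw [MvPolynomial.pderiv_X_of_ne hij.symm]; simp
      · simp

theorem aeval_isInv (hinv : ∀ i, IsInv A (f i)) (P : MvPolynomial ι ℂ) :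
    IsInv A (MvPolynomial.aeval f P) := by
  intro g
  have : (act (A g)).comp (MvPolynomial.aeval f) = MvPolynomial.aeval f := by
    apply MvPolynomial.algHom_ext
    intro i
    simp [hinv i g]
  exact DFunLike.congr_fun this P

theorem alg_indep (hA : ReflGen A) (he : ∀ i, 0 < e i) (hf : ∀ i, (f i).IsHomogeneous (e i))
    (hinv : ∀ i, IsInv A (f i))
    (hI : invIdeal A = Ideal.span (Set.range f))
    (hmin : ∀ i, f i ∉ Ideal.span (f '' {j | j ≠ i})) : AlgebraicIndependent ℂ f := by
  rw [algebraicIndependent_iff]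
  have main : ∀ n (P : MvPolynomial ι ℂ), P.totalDegree ≤ n → MvPolynomial.aeval f P = 0 → P = 0 := by
    intro n
    have hconst : ∀ P : MvPolynomial ι ℂ, P.totalDegree = 0 → MvPolynomial.aeval f P = 0 → P = 0 := by
      intro P hP h0
      rw [MvPolynomial.totalDegree_eq_zero_iff_eq_C] at hP
      rw [hP] at h0 ⊢
      rw [MvPolynomial.aeval_C, MvPolynomial.algebraMap_eq, MvPolynomial.C_eq_zero] at h0
      rw [h0, MvPolynomial.C_0]
    induction n with
    | zero => intro P hP; exact hconst P (by omega)
    | succ n ih =>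
      intro P hP h0
      have h1 : ∀ i, MvPolynomial.aeval f (MvPolynomial.pderiv i P) = 0 := by
        apply df_indep A hA he hf hI hmin _ (fun i => aeval_isInv A hinv _)
        intro k
        rw [← pderiv_aeval, h0, map_zero]
      have h2 : ∀ i, MvPolynomial.pderiv i P = 0 := by
        intro i
        apply ih _ _ (h1 i)
        apply Finset.sup_le
        intro m hm
        rw [MvPolynomial.mem_support_iff, MvPolynomial.coeff_pderiv] at hm
        have h3 := MvPolynomial.le_totalDegree
          (MvPolynomial.mem_support_iff.mpr (left_ne_zero_of_mul hm))
        rw [Finsupp.sum_add_index' (by simp) (by simp), Finsupp.sum_single_index rfl] at h3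
        omega
      apply hconst P _ h0
      rw [MvPolynomial.totalDegree_eq_zero_iff]
      intro m hm x
      by_contra hx
      have h3 := congrArg (MvPolynomial.coeff (m - Finsupp.single x 1)) (h2 x)
      rw [MvPolynomial.coeff_pderiv, MvPolynomial.coeff_zero] at h3
      have h4 : m - Finsupp.single x 1 + Finsupp.single x 1 = m := by
        apply tsub_add_cancel_of_le
        rw [Finsupp.single_le_iff]; omega
      rw [h4] at h3
      rcases mul_eq_zero.mp h3 with h5 | h5
      · exact (MvPolynomial.mem_support_iff.mp hm) h5
      · exact (Nat.cast_add_one_ne_zero _) h5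
  exact fun P hP => main _ P le_rfl hP

theorem inv_mem_range (he : ∀ i, 0 < e i) (hf : ∀ i, (f i).IsHomogeneous (e i))
    (hinv : ∀ i, IsInv A (f i))
    (hI : invIdeal A = Ideal.span (Set.range f)) (p : Sx l) (hp : IsInv A p) :
    p ∈ (MvPolynomial.aeval f : MvPolynomial ι ℂ →ₐ[ℂ] Sx l).range := by
  have main : ∀ d (p : Sx l), IsInv A p → p.IsHomogeneous d →
      p ∈ (MvPolynomial.aeval f : MvPolynomial ι ℂ →ₐ[ℂ] Sx l).range := by
    intro d
    induction d using Nat.strong_induction_on with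
    | _ d ih =>
      intro p hp hd
      by_cases h0 : d = 0
      · subst h0
        have : p = MvPolynomial.C (MvPolynomial.coeff 0 p) := by
          rw [← MvPolynomial.homogeneousComponent_zero, MvPolynomial.homogeneousComponent_eq_self hd]
        rw [this]
        exact ⟨MvPolynomial.C (MvPolynomial.coeff 0 p), by simp⟩
      · have h1 : p ∈ invIdeal A :=
          Ideal.subset_span ⟨⟨d, Nat.pos_of_ne_zero h0, hd⟩, hp⟩
        rw [hI] at h1
        obtain ⟨b, hb⟩ := Ideal.mem_span_range_iff_exists_fun.mp h1
        have h2 : p = ∑ j, avg A (b j) * f j := by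
          simp only [← avg_mul A (hinv _)]
          rw [← map_sum, hb, avg_of_inv A hp]
        have h3 : p = ∑ j, if e j ≤ d then
            MvPolynomial.homogeneousComponent (d - e j) (avg A (b j)) * f j else 0 := by
          conv_lhs => rw [← MvPolynomial.homogeneousComponent_eq_self hd, h2, map_sum]
          exact Finset.sum_congr rfl fun j _ => hc_mul (hf j) _ _
        rw [h3]
        apply Subalgebra.sum_mem
        intro j _
        split_ifs with h4
        · apply Subalgebra.mul_mem
          · apply ih (d - e j) (by have := he j; omega) _ (inv_hc A (avg_inv A _) _)
              (MvPolynomial.homogeneousComponent_isHomogeneous _ _)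
          · exact ⟨MvPolynomial.X j, by simp⟩
        · exact Subalgebra.zero_mem _
  rw [← MvPolynomial.sum_homogeneousComponent p]
  apply Subalgebra.sum_mem
  intro i _
  exact main i _ (inv_hc A hp i) (MvPolynomial.homogeneousComponent_isHomogeneous _ _)

end inv

section inv
variable {G : Type} [Group G] [Fintype G] {l : ℕ} (A : G →* Matrix (Fin l) (Fin l) ℂ)
variable {n : Type} [Fintype n] [DecidableEq n] (σ : G →* Matrix n n ℂ)

def twRep (d : ℕ) : Representation ℂ G (n → Sd l d) where
  toFun g := LinearMap.pi fun i => ∑ j, σ g i j • ((actd d (A g)) ∘ₗ LinearMap.proj j)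
  map_one' := by
    apply LinearMap.ext; intro v; funext i
    simp [actd_one, Matrix.one_apply]
  map_mul' g h := by
    apply LinearMap.ext; intro v; funext i
    simp only [map_mul, actd_mul, LinearMap.pi_apply, LinearMap.sum_apply, LinearMap.smul_apply,
      LinearMap.comp_apply, LinearMap.proj_apply, Module.End.mul_apply, Matrix.mul_apply,
      map_sum, map_smul, Finset.smul_sum, Finset.sum_smul, smul_smul]
    rw [Finset.sum_comm]

theorem twRep_apply (d : ℕ) (g : G) (v : n → Sd l d) (i : n) :
    twRep A σ d g v i = ∑ j, σ g i j • actd d (A g) (v j) := by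
  simp [twRep]

theorem twRep_char (d : ℕ) (g : G) : (twRep A σ d).character g =
    (σ g).trace * LinearMap.trace ℂ _ (actd d (A g)) := by
  classical
  let b := Module.finBasis ℂ (Sd l d)
  let b' : Module.Basis (Σ _ : n, Fin (Module.finrank ℂ (Sd l d))) ℂ (n → Sd l d) :=
    Pi.basis (fun _ => b)
  rw [Representation.character, LinearMap.trace_eq_matrix_trace ℂ b', LinearMap.trace_eq_matrix_trace ℂ b,
    Matrix.trace, Matrix.trace, Matrix.trace, Fintype.sum_sigma, Finset.sum_mul_sum]
  refine Finset.sum_congr rfl fun i _ => Finset.sum_congr rfl fun a _ => ?_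
  simp only [Matrix.diag_apply, LinearMap.toMatrix_apply]
  rw [Pi.basis_repr, Pi.basis_apply, twRep_apply, Finset.sum_eq_single i]
  · simp
  · intro j _ hj; rw [Pi.single_eq_of_ne hj]; simp
  · simp

def TInv (d : ℕ) : Submodule ℂ (n → Sx l) where
  carrier := {v | (∀ i, (v i).IsHomogeneous d) ∧
    ∀ g i, v i = ∑ j, σ g i j • act (A g) (v j)}
  add_mem' := by
    rintro v w ⟨h1, h2⟩ ⟨h3, h4⟩
    refine ⟨fun i => (h1 i).add (h3 i), fun g i => ?_⟩
    simp only [Pi.add_apply, map_add, smul_add, Finset.sum_add_distrib]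
    rw [← h2, ← h4]
  zero_mem' := ⟨fun i => MvPolynomial.isHomogeneous_zero _ _ _, fun g i => by simp⟩
  smul_mem' := by
    rintro c v ⟨h1, h2⟩
    refine ⟨fun i => (Sd l d).smul_mem c (h1 i), fun g i => ?_⟩
    simp only [Pi.smul_apply, map_smul]
    simp only [smul_comm _ c]
    rw [← Finset.smul_sum, ← h2]

def InvEquiv (d : ℕ) : (twRep A σ d).invariants ≃ₗ[ℂ] TInv A σ d where
  toFun v := ⟨fun i => (v.1 i : Sx l), fun i => (v.1 i).2, fun g i => by
    have := congrArg Subtype.val (congrFun (v.2 g) i)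
    rw [twRep_apply] at this
    simp only [AddSubmonoidClass.coe_finsetSum, Submodule.coe_smul, actd_coe] at this
    exact this.symm⟩
  invFun v := ⟨fun i => ⟨v.1 i, v.2.1 i⟩, fun g => by
    funext i
    apply Subtype.ext
    rw [twRep_apply]
    have := v.2.2 g i
    simp only [AddSubmonoidClass.coe_finsetSum, Submodule.coe_smul, actd_coe]
    exact this.symm⟩
  map_add' v w := rfl
  map_smul' c v := rfl
  left_inv v := rfl
  right_inv v := rfl

instance Inv_fin (d : ℕ) : Module.Finite ℂ (TInv A σ d) :=
  Module.Finite.equiv (InvEquiv A σ d)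

theorem finrank_Inv (d : ℕ) : (Module.finrank ℂ (TInv A σ d) : ℂ) = (Fintype.card G : ℂ)⁻¹ *
    ∑ g, (σ g).trace * LinearMap.trace ℂ _ (actd d (A g)) := by
  rw [← (InvEquiv A σ d).finrank_eq]
  have : Invertible (Nat.card G : ℂ) := invertibleOfNonzero (by
    rw [Nat.card_eq_fintype_card]; exact_mod_cast Fintype.card_ne_zero)
  rw [← Representation.card_inv_mul_sum_char_eq_finrank, Nat.card_eq_fintype_card]
  simp only [twRep_char]

/-- one-dimensional version -/
def Inv1 (χ : G →* ℂ) (d : ℕ) : Submodule ℂ (Sx l) where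
  carrier := {v | v.IsHomogeneous d ∧ ∀ g, v = χ g • act (A g) v}
  add_mem' := by
    rintro v w ⟨h1, h2⟩ ⟨h3, h4⟩
    refine ⟨h1.add h3, fun g => ?_⟩
    rw [map_add, smul_add, ← h2, ← h4]
  zero_mem' := ⟨MvPolynomial.isHomogeneous_zero _ _ _, fun g => by simp⟩
  smul_mem' := by
    rintro c v ⟨h1, h2⟩
    refine ⟨(Sd l d).smul_mem c h1, fun g => ?_⟩
    rw [map_smul, smul_comm, ← h2]

def chiM (χ : G →* ℂ) : G →* Matrix Unit Unit ℂ :=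
  (Matrix.scalar Unit : ℂ →+* Matrix Unit Unit ℂ).toMonoidHom.comp χ

def Inv1Equiv (χ : G →* ℂ) (d : ℕ) : TInv A (chiM χ) d ≃ₗ[ℂ] Inv1 A χ d where
  toFun v := ⟨v.1 (), v.2.1 (), fun g => by
    have := v.2.2 g ()
    simpa [chiM] using this⟩
  invFun v := ⟨fun _ => v.1, fun _ => v.2.1, fun g _ => by
    have := v.2.2 g
    simpa [chiM] using this⟩
  map_add' v w := rfl
  map_smul' c v := rfl
  left_inv v := rfl
  right_inv v := rfl

instance Inv1_fin (χ : G →* ℂ) (d : ℕ) : Module.Finite ℂ (Inv1 A χ d) :=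
  Module.Finite.equiv (Inv1Equiv A χ d)

theorem finrank_Inv1 (χ : G →* ℂ) (d : ℕ) : (Module.finrank ℂ (Inv1 A χ d) : ℂ) =
    (Fintype.card G : ℂ)⁻¹ * ∑ g, χ g * LinearMap.trace ℂ _ (actd d (A g)) := by
  rw [← (Inv1Equiv A χ d).finrank_eq, finrank_Inv]
  simp [chiM]

def ser (B : Matrix (Fin l) (Fin l) ℂ) : PowerSeries ℂ :=
  PowerSeries.mk fun d => LinearMap.trace ℂ _ (actd d B)

theorem ser_mul (g : G) : ser (A g) * ((A g).charpolyRev : PowerSeries ℂ) = 1 := by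
  apply molien (A g) (Fintype.card G) Fintype.card_pos
  rw [← map_pow, pow_card_eq_one, map_one]

def Hil : PowerSeries ℂ := PowerSeries.mk fun d => (Module.finrank ℂ (TInv A σ d) : ℂ)
def Hil1 (χ : G →* ℂ) : PowerSeries ℂ := PowerSeries.mk fun d => (Module.finrank ℂ (Inv1 A χ d) : ℂ)

theorem Hil_eq : Hil A σ = PowerSeries.C (Fintype.card G : ℂ)⁻¹ *
    ∑ g, PowerSeries.C (σ g).trace * ser (A g) := by
  ext d
  rw [Hil, PowerSeries.coeff_mk, finrank_Inv, PowerSeries.coeff_C_mul, map_sum]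
  simp [ser]

theorem Hil1_eq (χ : G →* ℂ) : Hil1 A χ = PowerSeries.C (Fintype.card G : ℂ)⁻¹ *
    ∑ g, PowerSeries.C (χ g) * ser (A g) := by
  ext d
  rw [Hil1, PowerSeries.coeff_mk, finrank_Inv1, PowerSeries.coeff_C_mul, map_sum]
  simp [ser]

/-- Hilbert series of the invariants from free generators. -/
theorem Hil1_gen {ι : Type} [Fintype ι] [DecidableEq ι] {f : ι → Sx l} {e : ι → ℕ}
    (hA : ReflGen A) (he : ∀ i, 0 < e i) (hf : ∀ i, (f i).IsHomogeneous (e i))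
    (hinv : ∀ i, IsInv A (f i))
    (hI : invIdeal A = Ideal.span (Set.range f))
    (hmin : ∀ i, f i ∉ Ideal.span (f '' {j | j ≠ i})) : Hil1 A 1 = ∏ i, geo (e i) 1 := by
  ext d
  obtain ⟨b, _⟩ := exists_basisY f e he hf (alg_indep A hA he hf hinv hI hmin) d (Inv1 A 1 d) (by
    intro p
    constructor
    · rintro ⟨h1, h2⟩
      refine ⟨inv_mem_range A he hf hinv hI p (fun g => ?_), h1⟩
      have := h2 g
      simpa using this.symm
    · rintro ⟨⟨P, rfl⟩, h2⟩
      refine ⟨h2, fun g => ?_⟩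
      have := aeval_isInv A hinv P g
      simpa using this.symm)
  rw [coeff_prod_geo, Hil1, PowerSeries.coeff_mk, Module.finrank_eq_card_basis b]
  simp

end inv

/-- products of `1 - q^e` determine the multiset of exponents -/
theorem geo_unique (s : Multiset ℕ) : ∀ t : Multiset ℕ, (∀ e ∈ s, 0 < e) → (∀ e ∈ t, 0 < e) →
    (s.map fun e => (1 - Polynomial.X ^ e : Polynomial ℂ)).prod =
    (t.map fun e => (1 - Polynomial.X ^ e : Polynomial ℂ)).prod → s = t := by
  have hroot : ∀ (s : Multiset ℕ) (z : ℂ), ((s.map fun e => (1 - Polynomial.X ^ e :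
      Polynomial ℂ)).prod).eval z = 0 ↔ ∃ e ∈ s, z ^ e = 1 := by
    intro s z
    rw [Polynomial.eval_multiset_prod, Multiset.prod_eq_zero_iff]
    simp only [Multiset.mem_map, exists_exists_and_eq_and, Polynomial.eval_sub, Polynomial.eval_one, Polynomial.eval_pow, Polynomial.eval_X, sub_eq_zero, eq_comm (a := (1:ℂ))]
  have hne : ∀ e : ℕ, 0 < e → (1 - Polynomial.X ^ e : Polynomial ℂ) ≠ 0 := by
    intro e he h
    have := congrArg (Polynomial.eval 0) h
    simp [he.ne'] at this
  have hdvd : ∀ (s t : Multiset ℕ) (N : ℕ), N ≠ 0 → (s.map fun e => (1 - Polynomial.X ^ e :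
      Polynomial ℂ)).prod = (t.map fun e => (1 - Polynomial.X ^ e : Polynomial ℂ)).prod →
      N ∈ s → ∃ e ∈ t, N ∣ e := by
    intro s t N hN h hs
    have hz := Complex.isPrimitiveRoot_exp N hN
    have h1 : ((s.map fun e => (1 - Polynomial.X ^ e :
      Polynomial ℂ)).prod).eval (Complex.exp (2 * Real.pi * Complex.I / N)) = 0 :=
      (hroot _ _).mpr ⟨N, hs, hz.pow_eq_one⟩
    rw [h, hroot] at h1
    obtain ⟨e, he, h2⟩ := h1
    exact ⟨e, he, hz.dvd_of_pow_eq_one e h2⟩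
  induction hc : Multiset.card s generalizing s with
  | zero =>
    intro t hs ht h
    rw [Multiset.card_eq_zero] at hc
    subst hc
    by_contra hne'
    obtain ⟨e, he⟩ := Multiset.exists_mem_of_ne_zero (Ne.symm hne')
    obtain ⟨e', he', _⟩ := hdvd t 0 e (ht e he).ne' h.symm he
    simp at he'
  | succ n ih =>
    intro t hs ht h
    have hs0 : s ≠ 0 := by rintro rfl; simp at hc
    obtain ⟨a, ha, hmax⟩ := s.toFinset.exists_max_image id (by
      obtain ⟨x, hx⟩ := Multiset.exists_mem_of_ne_zero hs0
      exact ⟨x, by simpa using hx⟩)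
    rw [Multiset.mem_toFinset] at ha
    have hmax' : ∀ x ∈ s, x ≤ a := fun x hx => hmax x (by simpa using hx)
    obtain ⟨b, hb, hab⟩ := hdvd s t a (hs a ha).ne' h ha
    obtain ⟨c, hc', hbc⟩ := hdvd t s b (ht b hb).ne' h.symm hb
    have h1 : a = b := le_antisymm (Nat.le_of_dvd (ht b hb) hab)
      ((Nat.le_of_dvd (hs c hc') hbc).trans (hmax' c hc'))
    subst h1
    obtain ⟨s', rfl⟩ := Multiset.exists_cons_of_mem ha
    obtain ⟨t', rfl⟩ := Multiset.exists_cons_of_mem hb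
    rw [Multiset.map_cons, Multiset.map_cons, Multiset.prod_cons, Multiset.prod_cons] at h
    have h2 := mul_left_cancel₀ (hne a (hs a ha)) h
    rw [ih s' (by simpa using hc) t' (fun e he => hs e (Multiset.mem_cons_of_mem he))
      (fun e he => ht e (Multiset.mem_cons_of_mem he)) h2]

section inv
variable {G : Type} [Group G] [Fintype G] {l : ℕ} (A : G →* Matrix (Fin l) (Fin l) ℂ)

theorem prod_geo_mul {ι : Type} [Fintype ι] (e : ι → ℕ) (he : ∀ i, 0 < e i) :
    (∏ i, geo (e i) 1) * ((∏ i, (1 - Polynomial.X ^ (e i)) : Polynomial ℂ) : PowerSeries ℂ) = 1 := by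
  rw [← Polynomial.coeToPowerSeries.ringHom_apply, map_prod, ← Finset.prod_mul_distrib]
  apply Finset.prod_eq_one
  intro i _
  have := geo_mul (e i) (he i) 1
  simpa using this

theorem perm_of_multiset {a b : Fin l → ℕ}
    (h : Multiset.map a Finset.univ.val = Multiset.map b Finset.univ.val) :
    ∃ π : Equiv.Perm (Fin l), ∀ i, a i = b (π i) := by
  have hc : ∀ v, Nonempty ({i // a i = v} ≃ {i // b i = v}) := by
    intro v
    rw [← Fintype.card_eq]
    have := congrArg (Multiset.count v) h
    rw [Multiset.count_map, Multiset.count_map] at this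
    rw [Fintype.card_subtype, Fintype.card_subtype]
    simp only [eq_comm (a := v)] at this
    exact this
  let e : ∀ v, {i // a i = v} ≃ {i // b i = v} := fun v => (hc v).some
  refine ⟨(Equiv.sigmaFiberEquiv a).symm.trans ((Equiv.sigmaCongrRight e).trans
    (Equiv.sigmaFiberEquiv b)), fun i => ?_⟩
  exact ((e (a i)) ⟨i, rfl⟩).2.symm

theorem exists_f (hA : ReflGen A) (m : Fin l → ℕ) (ha : Hil1 A 1 = ∏ i, geo (m i + 1) 1) :
    ∃ f : Fin l → Sx l, (∀ i, (f i).IsHomogeneous (m i + 1)) ∧ (∀ i, IsInv A (f i)) ∧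
    ∀ p : Fin l → Sx l, (∀ i, IsInv A (p i)) →
      (∀ k, ∑ i, MvPolynomial.pderiv k (f i) * p i = 0) → ∀ i, p i = 0 := by
  obtain ⟨ι, _, _, f, e, he, hf, hinv, hI, hmin⟩ := exists_mingen A
  have h1 := Hil1_gen A hA he hf hinv hI hmin
  rw [ha] at h1
  have h2 : (∏ i, (1 - Polynomial.X ^ (e i)) : Polynomial ℂ) =
      ∏ i, (1 - Polynomial.X ^ (m i + 1)) := by
    apply Polynomial.coe_injective ℂ
    have h3 := prod_geo_mul e he
    have h4 := prod_geo_mul (fun i => m i + 1) (fun i => Nat.succ_pos _)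
    rw [← h1] at h3
    exact mul_left_cancel₀ (left_ne_zero_of_mul_eq_one h3) (h3.trans h4.symm)
  have h5 : Multiset.map e Finset.univ.val =
      Multiset.map (fun i => m i + 1) Finset.univ.val := by
    apply geo_unique
    · simpa using he
    · simp
    · rw [Multiset.map_map, Multiset.map_map]
      exact h2
  have hcard : Fintype.card ι = l := by
    have := congrArg Multiset.card h5
    simpa using this
  let τ : Fin l ≃ ι := (Fintype.equivFinOfCardEq hcard).symm
  have h6 : Multiset.map (e ∘ τ) Finset.univ.val =
      Multiset.map (fun i => m i + 1) Finset.univ.val := by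
    rw [← h5, ← Multiset.map_map]
    congr 1
    have := Finset.map_univ_equiv τ
    rw [← this]; rfl
  obtain ⟨π, hπ⟩ := perm_of_multiset h6.symm
  refine ⟨fun i => f (τ (π i)), fun i => ?_, fun i => hinv _, ?_⟩
  · have := hπ i
    simp only [Function.comp] at this
    rw [this]; exact hf _
  · intro p hp hs i
    have := df_indep A hA he hf hI hmin (fun j => p ((π.trans τ).symm j)) (fun j => hp _) (by
      intro k
      rw [← hs k]
      exact (Fintype.sum_equiv (π.trans τ) _ _ (fun x => by simp)).symm) ((π.trans τ) i)
    simpa using this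

def jac (f : Fin l → Sx l) : Matrix (Fin l) (Fin l) (Sx l) :=
  Matrix.of fun i k => MvPolynomial.pderiv k (f i)

theorem jac_equiv {f : Fin l → Sx l} (hinv : ∀ i, IsInv A (f i)) (g : G) :
    jac f = (jac f).map (act (A g)) * (A g).transpose.map MvPolynomial.C := by
  ext1 i k
  rw [Matrix.mul_apply]
  simp only [jac, Matrix.of_apply, Matrix.map_apply, Matrix.transpose_apply]
  conv_lhs => rw [← hinv i g, act, pderiv_aeval]
  refine Finset.sum_congr rfl fun j _ => ?_
  rw [mul_comm]
  congr 1
  simp [MvPolynomial.pderiv_X, Pi.single_apply]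

theorem act_ne (g : G) {p : Sx l} (hp : p ≠ 0) : act (A g) p ≠ 0 := by
  intro h
  apply hp
  have : act (A g⁻¹) (act (A g) p) = p := by
    rw [← act_mul_apply, ← map_mul, inv_mul_cancel, map_one, act_one]; rfl
  rw [← this, h, map_zero]

theorem jac_det_ne {f : Fin l → Sx l} (hinv : ∀ i, IsInv A (f i))
    (hind : ∀ p : Fin l → Sx l, (∀ i, IsInv A (p i)) →
      (∀ k, ∑ i, MvPolynomial.pderiv k (f i) * p i = 0) → ∀ i, p i = 0) : (jac f).det ≠ 0 := by
  classical
  intro h0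
  obtain ⟨v, hv, hvM⟩ := Matrix.exists_vecMul_eq_zero_iff.mpr h0
  obtain ⟨i0, hi0⟩ := Function.ne_iff.mp hv
  set c : Sx l := ∏ g ∈ Finset.univ.erase (1 : G), act (A g) (v i0) with hc
  have hN : c * v i0 = ∏ g, act (A g) (v i0) := by
    rw [← Finset.prod_erase_mul Finset.univ _ (Finset.mem_univ (1 : G)), map_one, act_one]; rfl
  have hN0 : c * v i0 ≠ 0 := by
    rw [hN]
    exact Finset.prod_ne_zero_iff.mpr fun g _ => act_ne A g hi0
  have hNinv : IsInv A (c * v i0) := by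
    intro g
    rw [hN, map_prod]
    exact Fintype.prod_equiv (Equiv.mulLeft g) (fun x => act (A g) (act (A x) (v i0)))
      (fun x => act (A x) (v i0))
      (fun x => by rw [← act_mul_apply, ← map_mul, Equiv.coe_mulLeft])
  apply hN0
  rw [← avg_of_inv A hNinv]
  apply hind (fun i => avg A (c * v i)) (fun i => avg_inv A _) _ i0
  intro k
  have h1 : ∀ g : G, ∑ i, MvPolynomial.pderiv k (f i) * act (A g) (c * v i) = 0 := by
    intro g
    have h2 : ∀ j, ∑ i, act (A g) (v i) * act (A g) (jac f i j) = 0 := by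
      intro j
      have := congrArg (act (A g)) (congrFun hvM j)
      simpa [Matrix.vecMul, dotProduct, map_sum] using this
    have h3 : ∀ i, MvPolynomial.pderiv k (f i) =
        ∑ j, act (A g) (jac f i j) * MvPolynomial.C (A g k j) := by
      intro i
      have := congrFun (congrFun (jac_equiv A hinv g) i) k
      rw [Matrix.mul_apply] at this
      exact this
    simp only [h3, map_mul, Finset.sum_mul]
    rw [Finset.sum_comm]
    apply Finset.sum_eq_zero
    intro j _
    have : ∑ i, act (A g) (jac f i j) * MvPolynomial.C (A g k j) *
        (act (A g) c * act (A g) (v i)) = MvPolynomial.C (A g k j) * act (A g) c *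
        ∑ i, act (A g) (v i) * act (A g) (jac f i j) := by
      rw [Finset.mul_sum]
      exact Finset.sum_congr rfl fun i _ => by ring
    rw [this, h2, mul_zero]
  simp only [avg_apply, mul_smul_comm, Finset.mul_sum]
  rw [← Finset.smul_sum, Finset.sum_comm]
  simp only [h1, Finset.sum_const_zero, smul_zero]

theorem det_homog {n : Type*} [Fintype n] [DecidableEq n] (N : Matrix n n (Sx l)) (r : n → ℕ)
    (hN : ∀ i j, (N i j).IsHomogeneous (r i)) : N.det.IsHomogeneous (∑ i, r i) := by
  rw [Matrix.det_apply]
  apply MvPolynomial.IsHomogeneous.sum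
  intro π _
  have h1 : (∏ i, N (π i) i).IsHomogeneous (∑ i, r i) := by
    rw [← Equiv.sum_comp π r]
    exact MvPolynomial.IsHomogeneous.prod _ _ _ fun i _ => hN _ _
  rcases Int.units_eq_one_or (Equiv.Perm.sign π) with h | h
  · rw [h, one_smul]; exact h1
  · rw [h, Units.neg_smul, one_smul]; exact h1.neg

def adjm (k : ℕ) (M : Matrix (Fin l) (Fin l) (Sx l)) :
    Matrix (Set.powersetCard (Fin l) k) (Set.powersetCard (Fin l) k) (Sx l) :=
  Matrix.of fun J I => (Nmat M J I).det

theorem adjm_map (k : ℕ) (M : Matrix (Fin l) (Fin l) (Sx l)) (h : M.det ≠ 0) :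
    cpd k M * adjm k M = M.det • 1 ∧ adjm k M * cpd k M = M.det • 1 := by
  let F := FractionRing (Sx l)
  let φ := algebraMap (Sx l) F
  have hφ : Function.Injective φ := IsFractionRing.injective _ _
  have hdet : (M.map φ).det = φ M.det := by
    rw [RingHom.map_det, RingHom.mapMatrix_apply]
  have hu : IsUnit (M.map φ).det := by
    rw [hdet]
    exact IsUnit.mk0 _ ((map_ne_zero_iff φ hφ).mpr h)
  set M' := (M.map φ)⁻¹
  have h1 : M.map φ * M' = 1 := Matrix.mul_nonsing_inv _ hu
  have h2 : M' * M.map φ = 1 := Matrix.nonsing_inv_mul _ hu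
  have h3 : (adjm k M).map φ = φ M.det • cpd k M' := by
    ext J I
    rw [Matrix.smul_apply, smul_eq_mul, ← hdet, ← det_Nmat _ _ h1]
    simp only [adjm, Matrix.map_apply, Matrix.of_apply, RingHom.map_det, RingHom.mapMatrix_apply]
    congr 1
    ext i j
    simp only [Nmat, Matrix.map_apply, Matrix.of_apply]
    split_ifs
    · simp only [Pi.single_apply]; split_ifs <;> simp
    · rfl
  have hinj : Function.Injective (fun N : Matrix (Set.powersetCard (Fin l) k)
    (Set.powersetCard (Fin l) k) (Sx l) => N.map φ) := Matrix.map_injective hφ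
  constructor
  · apply hinj
    simp only
    rw [Matrix.map_mul, h3, ← cpd_map, Matrix.mul_smul, ← cpd_mul, h1, cpd_one]
    ext i j
    by_cases hij : i = j
    · subst hij; simp
    · simp [hij]
  · apply hinj
    simp only
    rw [Matrix.map_mul, h3, ← cpd_map, Matrix.smul_mul, ← cpd_mul, h2, cpd_one]
    ext i j
    by_cases hij : i = j
    · subst hij; simp
    · simp [hij]

end inv

section inv
variable {G : Type} [Group G] [Fintype G] {l : ℕ} (A : G →* Matrix (Fin l) (Fin l) ℂ)

def cpdHom (k : ℕ) : G →* Matrix (Set.powersetCard (Fin l) k) (Set.powersetCard (Fin l) k) ℂ where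
  toFun g := cpd k (A g)
  map_one' := by rw [map_one, cpd_one]
  map_mul' g h := by rw [map_mul, cpd_mul]

def detC : G →* ℂ := Matrix.detMonoidHom.comp A

theorem detC_apply (g : G) : detC A g = (A g).det := rfl

def mI (m : Fin l → ℕ) {k : ℕ} (I : Set.powersetCard (Fin l) k) : ℕ := ∑ i ∈ I.1, m i
def mC (m : Fin l → ℕ) {k : ℕ} (I : Set.powersetCard (Fin l) k) : ℕ := ∑ i ∈ (I.1)ᶜ, m i

theorem mI_add_mC (m : Fin l → ℕ) {k : ℕ} (I : Set.powersetCard (Fin l) k) :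
    mI m I + mC m I = ∑ i, m i := Finset.sum_add_sum_compl _ _

theorem cpd_homog {M : Matrix (Fin l) (Fin l) (Sx l)} {m : Fin l → ℕ}
    (hM : ∀ i j, (M i j).IsHomogeneous (m i)) {k : ℕ} (I J : Set.powersetCard (Fin l) k) :
    (cpd k M I J).IsHomogeneous (mI m I) := by
  have : mI m I = ∑ j, m (emb I j) := by
    have h : I.1 = Finset.univ.map (emb I).toEmbedding := by
      ext i
      rw [← range_emb]; simp
    rw [mI, h, Finset.sum_map]; rfl
  rw [this]
  exact det_homog _ _ fun i j => hM _ _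

theorem adjm_homog {M : Matrix (Fin l) (Fin l) (Sx l)} {m : Fin l → ℕ}
    (hM : ∀ i j, (M i j).IsHomogeneous (m i)) {k : ℕ} (J I : Set.powersetCard (Fin l) k) :
    (adjm k M J I).IsHomogeneous (mC m I) := by
  have : mC m I = ∑ i, (if i ∈ I.1 then 0 else m i) := by
    rw [mC, ← Finset.sum_add_sum_compl I.1 (fun i => if i ∈ I.1 then 0 else m i)]
    rw [Finset.sum_eq_zero (s := I.1) (fun i hi => by simp [hi]), zero_add]
    exact Finset.sum_congr rfl fun i hi => by rw [if_neg (Finset.mem_compl.mp hi)]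
  rw [this]
  apply det_homog
  intro i j
  simp only [Nmat, Matrix.of_apply]
  split_ifs with h1 h2 h2
  · simp only [Pi.single_apply]
    split_ifs
    · exact MvPolynomial.isHomogeneous_one _ _
    · exact MvPolynomial.isHomogeneous_zero _ _ _
  · exact absurd ((range_emb _ _).mp h1) h2
  · exact absurd ((range_emb _ _).mpr h2) h1
  · exact hM i j

theorem jac_homog {f : Fin l → Sx l} {m : Fin l → ℕ} (hf : ∀ i, (f i).IsHomogeneous (m i + 1)) :
    ∀ i j, (jac f i j).IsHomogeneous (m i) := fun i j => by
  have := (hf i).pderiv (i := j)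
  simpa [jac] using this

theorem cpd_jac_equiv {f : Fin l → Sx l} (hinv : ∀ i, IsInv A (f i)) (k : ℕ) (g : G)
    (I K : Set.powersetCard (Fin l) k) :
    cpd k (jac f) I K = ∑ L, cpd k (A g) K L • act (A g) (cpd k (jac f) I L) := by
  have h := congrArg (cpd k) (jac_equiv A hinv g)
  rw [cpd_mul] at h
  have e1 : cpd k ((jac f).map (act (A g))) = (cpd k (jac f)).map (act (A g)) :=
    cpd_map (act (A g)).toRingHom k (jac f)
  have e2 : cpd k ((A g).transpose.map (MvPolynomial.C : ℂ →+* Sx l)) =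
      (cpd k (A g)).transpose.map (MvPolynomial.C : ℂ →+* Sx l) := by
    rw [cpd_map, cpd_transpose]
  have h' := congrFun (congrFun h I) K
  rw [Matrix.mul_apply] at h'
  rw [h']
  refine Finset.sum_congr rfl fun L _ => ?_
  rw [e1, MvPolynomial.smul_eq_C_mul, mul_comm]
  congr 1
  exact congrFun (congrFun e2 L) K

theorem vecMul_inj {k : ℕ} {M : Matrix (Fin l) (Fin l) (Sx l)} (hdet : M.det ≠ 0)
    (p : Set.powersetCard (Fin l) k → Sx l) (hp : ∀ K, ∑ I, p I * cpd k M I K = 0) :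
    ∀ I, p I = 0 := by
  have h1 : Matrix.vecMul p (cpd k M) = 0 := by
    funext K; exact hp K
  have h2 : Matrix.vecMul (Matrix.vecMul p (cpd k M)) (adjm k M) = M.det • p := by
    rw [Matrix.vecMul_vecMul, (adjm_map k M hdet).1, Matrix.vecMul_smul, Matrix.vecMul_one]
  rw [h1, Matrix.zero_vecMul] at h2
  intro I
  have := congrFun h2 I
  simp only [Pi.zero_apply, Pi.smul_apply, smul_eq_mul] at this
  exact (mul_eq_zero.mp this.symm).resolve_left hdet

theorem adjm_inj {k : ℕ} {M : Matrix (Fin l) (Fin l) (Sx l)} (hdet : M.det ≠ 0)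
    (p : Set.powersetCard (Fin l) k → Sx l) (hp : ∀ K, ∑ I, p I * adjm k M I K = 0) :
    ∀ I, p I = 0 := by
  have h1 : Matrix.vecMul p (adjm k M) = 0 := by
    funext K; exact hp K
  have h2 : Matrix.vecMul (Matrix.vecMul p (adjm k M)) (cpd k M) = M.det • p := by
    rw [Matrix.vecMul_vecMul, (adjm_map k M hdet).2, Matrix.vecMul_smul, Matrix.vecMul_one]
  rw [h1, Matrix.zero_vecMul] at h2
  intro I
  have := congrFun h2 I
  simp only [Pi.zero_apply, Pi.smul_apply, smul_eq_mul] at this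
  exact (mul_eq_zero.mp this.symm).resolve_left hdet

theorem lower {f : Fin l → Sx l} {m : Fin l → ℕ} (hf : ∀ i, (f i).IsHomogeneous (m i + 1))
    (hinv : ∀ i, IsInv A (f i)) (hdet : (jac f).det ≠ 0) (k d : ℕ) :
    ∑ I : Set.powersetCard (Fin l) k, (if mI m I ≤ d then
      Module.finrank ℂ (Inv1 A 1 (d - mI m I)) else 0) ≤
      Module.finrank ℂ (TInv A (cpdHom A k) d) := by
  classical
  let V : Set.powersetCard (Fin l) k → Submodule ℂ (Sx l) := fun I =>
    if mI m I ≤ d then Inv1 A 1 (d - mI m I) else ⊥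
  have hV : ∀ I (p : V I) K, ((p : Sx l) * cpd k (jac f) I K).IsHomogeneous d ∧
      IsInv A (p : Sx l) := by
    rintro I ⟨p, hp⟩ K
    simp only [V] at hp ⊢
    split_ifs at hp with h
    · constructor
      · have := hp.1.mul (cpd_homog (jac_homog hf) I K)
        rwa [Nat.sub_add_cancel h] at this
      · intro g
        have := hp.2 g
        simpa using this.symm
    · have hp : p = 0 := hp
      subst hp
      exact ⟨by rw [zero_mul]; exact MvPolynomial.isHomogeneous_zero _ _ _, fun g => map_zero _⟩
  have hfin : ∀ I, Module.Finite ℂ (V I) := by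
    intro I
    by_cases h : mI m I ≤ d
    · rw [show V I = Inv1 A 1 (d - mI m I) from if_pos h]; infer_instance
    · rw [show V I = ⊥ from if_neg h]; infer_instance
  have hrank : ∀ I, Module.finrank ℂ (V I) = if mI m I ≤ d then
      Module.finrank ℂ (Inv1 A 1 (d - mI m I)) else 0 := by
    intro I
    by_cases h : mI m I ≤ d
    · rw [show V I = Inv1 A 1 (d - mI m I) from if_pos h, if_pos h]
    · rw [show V I = ⊥ from if_neg h, if_neg h]; simp
  let T : (∀ I, V I) →ₗ[ℂ] TInv A (cpdHom A k) d :=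
    { toFun := fun p => ⟨fun K => ∑ I, (p I : Sx l) * cpd k (jac f) I K, by
        refine ⟨fun K => MvPolynomial.IsHomogeneous.sum _ _ _ fun I _ => (hV I (p I) K).1, ?_⟩
        intro g K
        simp only [map_sum, map_mul, Finset.smul_sum]
        rw [Finset.sum_comm]
        refine Finset.sum_congr rfl fun I _ => ?_
        rw [(hV I (p I) K).2 g, cpd_jac_equiv A hinv k g I K, Finset.mul_sum]
        refine Finset.sum_congr rfl fun L _ => ?_
        rw [mul_smul_comm]; rfl⟩
      map_add' := fun p q => by
        ext K : 2
        simp [add_mul, Finset.sum_add_distrib]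
      map_smul' := fun c p => by
        ext K : 2
        simp [Finset.smul_sum] }
  have hT : Function.Injective T := by
    rw [injective_iff_map_eq_zero]
    intro p hp
    have := vecMul_inj hdet (fun I => (p I : Sx l)) (fun K => congrFun (congrArg Subtype.val hp) K)
    funext I
    exact Subtype.ext (this I)
  have := LinearMap.finrank_le_finrank_of_injective hT
  rw [Module.finrank_pi_fintype] at this
  simpa only [hrank] using this

theorem jac_det_equiv {f : Fin l → Sx l} (hinv : ∀ i, IsInv A (f i)) (g : G) :
    (jac f).det = (A g).det • act (A g) (jac f).det := by
  conv_lhs => rw [jac_equiv A hinv g, Matrix.det_mul]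
  have e1 : ((jac f).map (act (A g))).det = act (A g) (jac f).det := by
    rw [AlgHom.map_det]; rfl
  have e2 : ((A g).transpose.map (MvPolynomial.C : ℂ →+* Sx l)).det =
      MvPolynomial.C (A g).det := by
    rw [← Matrix.det_transpose (A g), RingHom.map_det]; rfl
  rw [e1, MvPolynomial.smul_eq_C_mul, mul_comm]
  congr 1

theorem upper {f : Fin l → Sx l} {m : Fin l → ℕ} (hf : ∀ i, (f i).IsHomogeneous (m i + 1))
    (hinv : ∀ i, IsInv A (f i)) (hdet : (jac f).det ≠ 0) (k d : ℕ) :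
      Module.finrank ℂ (TInv A (cpdHom A k) d) ≤
    ∑ I : Set.powersetCard (Fin l) k, Module.finrank ℂ (Inv1 A (detC A) (d + mC m I)) := by
  classical
  have hmem : ∀ (v : TInv A (cpdHom A k) d) I, ∑ J, v.1 J * adjm k (jac f) J I ∈
      Inv1 A (detC A) (d + mC m I) := by
    intro v I
    refine ⟨MvPolynomial.IsHomogeneous.sum _ _ _ fun J _ =>
      (v.2.1 J).mul (adjm_homog (jac_homog hf) J I), ?_⟩
    intro g
    let b : Set.powersetCard (Fin l) k → Sx l := fun I => ∑ J, v.1 J * adjm k (jac f) J I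
    have hb : ∀ K, ∑ I, b I * cpd k (jac f) I K = (jac f).det * v.1 K := by
      intro K
      have : Matrix.vecMul (Matrix.vecMul v.1 (adjm k (jac f))) (cpd k (jac f)) =
          (jac f).det • v.1 := by
        rw [Matrix.vecMul_vecMul, (adjm_map k _ hdet).2, Matrix.vecMul_smul, Matrix.vecMul_one]
      exact congrFun this K
    have hb2 : ∀ K, ∑ I, (detC A g • act (A g) (b I)) * cpd k (jac f) I K =
        (jac f).det * v.1 K := by
      intro K
      have e : ∀ I, (detC A g • act (A g) (b I)) * cpd k (jac f) I K =
        ∑ L, (detC A g * cpd k (A g) K L) • act (A g) (b I * cpd k (jac f) I L) := by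
        intro I
        rw [cpd_jac_equiv A hinv k g I K, Finset.mul_sum]
        refine Finset.sum_congr rfl fun L _ => ?_
        rw [smul_mul_smul_comm, map_mul]
      simp only [e]
      rw [Finset.sum_comm]
      simp only [← Finset.smul_sum, ← map_sum, hb]
      rw [v.2.2 g K, Finset.mul_sum]
      refine Finset.sum_congr rfl fun L _ => ?_
      conv_rhs => rw [jac_det_equiv A hinv g]
      rw [smul_mul_smul_comm, map_mul]; rfl
    have := vecMul_inj hdet (fun I => b I - detC A g • act (A g) (b I)) (fun K => by
      simp only [sub_mul, Finset.sum_sub_distrib]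
      rw [hb, hb2, sub_self]) I
    exact sub_eq_zero.mp this
  let T : TInv A (cpdHom A k) d →ₗ[ℂ] (∀ I : Set.powersetCard (Fin l) k,
      Inv1 A (detC A) (d + mC m I)) :=
    { toFun := fun v I => ⟨_, hmem v I⟩
      map_add' := fun p q => by
        funext I; apply Subtype.ext
        simp [add_mul, Finset.sum_add_distrib]
      map_smul' := fun c p => by
        funext I; apply Subtype.ext
        simp [Finset.smul_sum] }
  have hT : Function.Injective T := by
    rw [injective_iff_map_eq_zero]
    intro p hp
    have := adjm_inj hdet p.1 (fun K => congrArg Subtype.val (congrFun hp K))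
    apply Subtype.ext
    funext I
    exact this I
  have := LinearMap.finrank_le_finrank_of_injective hT
  rwa [Module.finrank_pi_fintype] at this

theorem Hil_cpd (hA : ReflGen A) (m : Fin l → ℕ) (ha : Hil1 A 1 = ∏ i, geo (m i + 1) 1)
    (hb : Hil1 A (detC A) = PowerSeries.X ^ (∑ i, m i) * ∏ i, geo (m i + 1) 1) (k : ℕ) :
    Hil A (cpdHom A k) = (∑ I : Set.powersetCard (Fin l) k, PowerSeries.X ^ (mI m I)) *
      ∏ i, geo (m i + 1) 1 := by
  obtain ⟨f, hf, hinv, hind⟩ := exists_f A hA m ha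
  have hdet := jac_det_ne A hinv hind
  rw [← ha] at hb ⊢
  ext d
  have hlo := lower A hf hinv hdet k d
  have hup := upper A hf hinv hdet k d
  have hc : ∀ I : Set.powersetCard (Fin l) k, Module.finrank ℂ (Inv1 A (detC A) (d + mC m I)) =
      if mI m I ≤ d then Module.finrank ℂ (Inv1 A 1 (d - mI m I)) else 0 := by
    intro I
    have := congrArg (PowerSeries.coeff (d + mC m I)) hb
    rw [PowerSeries.coeff_X_pow_mul', ← mI_add_mC m I] at this
    simp only [Hil1, PowerSeries.coeff_mk, Nat.add_sub_add_right, add_le_add_iff_right] at this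
    split_ifs at this ⊢
    · exact_mod_cast this
    · exact_mod_cast this
  simp only [hc] at hup
  have := le_antisymm hup hlo
  rw [Finset.sum_mul, map_sum]
  simp only [PowerSeries.coeff_X_pow_mul']
  simp only [Hil, Hil1, PowerSeries.coeff_mk]
  rw [this]
  push_cast
  rfl

theorem sum_mI {R : Type*} [CommRing R] (q : R) (m : Fin l → ℕ) :
    ∑ k ∈ Finset.range (l + 1), (-1) ^ k * ∑ I : Set.powersetCard (Fin l) k, q ^ (mI m I) =
      ∏ i, (1 - q ^ (m i)) := by
  have h := Finset.prod_add (fun i => -q ^ (m i)) (fun _ => (1 : R)) (Finset.univ : Finset (Fin l))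
  simp only [Finset.prod_const_one, mul_one] at h
  have h2 : ∏ i, (1 - q ^ (m i)) = ∏ i, (-q ^ (m i) + 1) :=
    Finset.prod_congr rfl fun i _ => by ring
  rw [h2, h, Finset.sum_powerset, Finset.card_univ, Fintype.card_fin]
  refine Finset.sum_congr rfl fun k _ => ?_
  rw [Finset.mul_sum]
  refine Finset.sum_bij' (fun I _ => I.1) (fun t ht => ⟨t, (Finset.mem_powersetCard.mp ht).2⟩)
    ?_ ?_ ?_ ?_ ?_
  · intro I _; exact Finset.mem_powersetCard.mpr ⟨Finset.subset_univ _, I.2⟩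
  · intro t ht; simp
  · intro I _; rfl
  · intro I _; rfl
  · intro I _
    have : I.1.card = k := I.2
    rw [Finset.prod_neg, this, mI, Finset.prod_pow_eq_pow_sum]

theorem main_series (hA : ReflGen A) (m : Fin l → ℕ) (ha : Hil1 A 1 = ∏ i, geo (m i + 1) 1)
    (hb : Hil1 A (detC A) = PowerSeries.X ^ (∑ i, m i) * ∏ i, geo (m i + 1) 1) :
    PowerSeries.C (Fintype.card G : ℂ)⁻¹ * ∑ g, PowerSeries.C (1 - A g).det * ser (A g) =
      (∏ i, (1 - PowerSeries.X ^ (m i))) * ∏ i, geo (m i + 1) 1 := by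
  rw [← sum_mI, Finset.sum_mul]
  simp only [mul_assoc]
  simp only [← Hil_cpd A hA m ha hb, Hil_eq]
  simp only [det_one_sub_eq, map_sum, Finset.sum_mul, Finset.mul_sum]
  rw [Finset.sum_comm]
  refine Finset.sum_congr rfl fun k _ => Finset.sum_congr rfl fun g _ => ?_
  simp only [map_mul, map_pow, map_neg, map_one]
  simp only [cpdHom, MonoidHom.coe_mk, OneHom.coe_mk]
  ring

end inv

abbrev FP : Type := FractionRing (PowerSeries ℂ)

abbrev aF : PowerSeries ℂ →+* FP := algebraMap (PowerSeries ℂ) FP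

theorem aF_inj : Function.Injective aF := IsFractionRing.injective _ _

def psi0 : Polynomial ℚ →+* PowerSeries ℂ :=
  (Polynomial.coeToPowerSeries.ringHom).comp (Polynomial.mapRingHom (algebraMap ℚ ℂ))

theorem psi0_apply (p : Polynomial ℚ) :
    psi0 p = ((p.map (algebraMap ℚ ℂ) : Polynomial ℂ) : PowerSeries ℂ) := rfl

theorem psi0_inj : Function.Injective psi0 := by
  intro p q h
  rw [psi0_apply, psi0_apply] at h
  exact Polynomial.map_injective _ (algebraMap ℚ ℂ).injective (Polynomial.coe_injective ℂ h)

def phi : K →+* FP :=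
  IsFractionRing.lift (K := K) (g := aF.comp psi0) (aF_inj.comp psi0_inj)

theorem phi_alg (p : Polynomial ℚ) : phi (algebraMap (Polynomial ℚ) K p) = aF (psi0 p) :=
  IsFractionRing.lift_algebraMap _ _

theorem phi_X : phi RatFunc.X = aF PowerSeries.X := by
  rw [← RatFunc.algebraMap_X, phi_alg, psi0_apply]; simp

theorem phi_C (c : ℚ) : phi (RatFunc.C c) = aF (PowerSeries.C (algebraMap ℚ ℂ c)) := by
  rw [← RatFunc.algebraMap_C, phi_alg, psi0_apply]; simp

/-- the Molien denominator -/
def Dn {l : ℕ} (M : Matrix (Fin l) (Fin l) ℚ) : K :=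
  Matrix.det ((1 : Matrix (Fin l) (Fin l) K) - (RatFunc.X : K) • mapK M)

theorem Dn_eq {l : ℕ} (M : Matrix (Fin l) (Fin l) ℚ) :
    Dn M = algebraMap (Polynomial ℚ) K M.charpolyRev := by
  rw [Dn, Matrix.charpolyRev, RingHom.map_det]
  congr 1
  ext i j
  by_cases h : i = j
  · subst h; simp [mapK]; ring
  · simp [mapK, h]; ring

theorem map_charpolyRev' {l : ℕ} (M : Matrix (Fin l) (Fin l) ℚ) :
    M.charpolyRev.map (algebraMap ℚ ℂ) = (M.map (algebraMap ℚ ℂ)).charpolyRev := by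
  rw [Matrix.charpolyRev, Matrix.charpolyRev, ← Polynomial.coe_mapRingHom, RingHom.map_det]
  congr 1
  ext1 i j
  by_cases h : i = j
  · subst h; simp
  · simp [h]

section fin
variable {G : Type} [Group G] [Fintype G] {l : ℕ} (ρ : G →* Matrix.GeneralLinearGroup (Fin l) ℚ)

def AC : G →* Matrix (Fin l) (Fin l) ℂ :=
  ((algebraMap ℚ ℂ).mapMatrix.toMonoidHom.comp (Units.coeHom _)).comp ρ

theorem AC_apply (g : G) : AC ρ g = (ρ g).val.map (algebraMap ℚ ℂ) := rfl

theorem phi_Dn (g : G) : phi (Dn (ρ g).val)⁻¹ = aF (ser (AC ρ g)) := by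
  have h := congrArg aF (ser_mul (AC ρ) g)
  rw [map_mul, map_one] at h
  rw [map_inv₀, Dn_eq, phi_alg, psi0_apply, map_charpolyRev']
  exact (eq_inv_of_mul_eq_one_left h).symm

theorem phi_geo (e : ℕ) (he : 0 < e) : phi (1 - RatFunc.X ^ e)⁻¹ = aF (geo e 1) := by
  have h := congrArg aF (geo_mul e he 1)
  rw [map_mul, map_one aF] at h
  rw [map_inv₀]
  refine Eq.trans ?_ (eq_inv_of_mul_eq_one_left h).symm
  congr 1
  simp [phi_X]

theorem phi_sum (c : G → ℚ) : phi ((Fintype.card G : K)⁻¹ * ∑ g, RatFunc.C (c g) * (Dn (ρ g).val)⁻¹) =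
    aF (PowerSeries.C (Fintype.card G : ℂ)⁻¹ *
      ∑ g, PowerSeries.C (algebraMap ℚ ℂ (c g)) * ser (AC ρ g)) := by
  rw [map_mul, map_mul, map_sum, map_sum]
  have hc : (Fintype.card G : K)⁻¹ = RatFunc.C ((Fintype.card G : ℚ)⁻¹) := by
    rw [map_inv₀, map_natCast]
  rw [hc, phi_C]
  congr 1
  · simp
  · refine Finset.sum_congr rfl fun g _ => ?_
    rw [map_mul, map_mul, phi_Dn, phi_C]

theorem refl_AC (hrefl : Subgroup.closure
        {g : G | Matrix.rank ((1 : Matrix (Fin l) (Fin l) ℚ) - (ρ g).val) = 1} = ⊤) :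
    ReflGen (AC ρ) := by
  rw [ReflGen, eq_top_iff, ← hrefl]
  apply Subgroup.closure_mono
  intro g hg
  have hg : Matrix.rank ((1 : Matrix (Fin l) (Fin l) ℚ) - (ρ g).val) = 1 := hg
  rw [Matrix.rank] at hg
  obtain ⟨⟨u, hu⟩, hu0, hspan⟩ := finrank_eq_one_iff'.mp hg
  have hu0 : u ≠ 0 := fun h => hu0 (Subtype.ext h)
  choose c hc using fun v => hspan ⟨_, LinearMap.mem_range_self
    (Matrix.mulVecLin ((1 : Matrix (Fin l) (Fin l) ℚ) - (ρ g).val)) v⟩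
  refine ⟨fun i => (u i : ℂ), fun j => (c (Pi.single j 1) : ℂ), ?_, ?_⟩
  · intro h; apply hu0
    funext i
    have := congrFun h i
    simpa using this
  · rw [eq_sub_iff_add_eq, ← eq_sub_iff_add_eq']
    ext i j
    have h1 := congrFun (congrArg Subtype.val (hc (Pi.single j 1))) i
    simp at h1
    rw [Matrix.vecMulVec_apply, AC_apply]
    have h2 : (u i : ℂ) * (c (Pi.single j 1) : ℂ) = ((c (Pi.single j 1) * u i : ℚ) : ℂ) := by
      push_cast; ring
    rw [h2, h1]
    by_cases h : i = j
    · subst h; simp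
    · simp [h]

theorem Xinv_inj : Function.Injective (Polynomial.aeval (R := ℚ) ((RatFunc.X : K)⁻¹)) := by
  rw [← transcendental_iff_injective]
  intro h
  have := h.inv
  rw [inv_inv] at this
  exact RatFunc.transcendental_X (K := ℚ) (by convert this; exact Subsingleton.elim _ _)

def theta : K →+* K := IsFractionRing.lift (K := K)
  (g := (Polynomial.aeval (R := ℚ) ((RatFunc.X : K)⁻¹)).toRingHom) Xinv_inj

theorem theta_alg (p : Polynomial ℚ) : theta (algebraMap (Polynomial ℚ) K p) =
    Polynomial.aeval (R := ℚ) ((RatFunc.X : K)⁻¹) p :=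
  IsFractionRing.lift_algebraMap _ _

theorem theta_X : theta RatFunc.X = (RatFunc.X)⁻¹ := by
  rw [← RatFunc.algebraMap_X, theta_alg]; simp

theorem theta_C (c : ℚ) : theta (RatFunc.C c) = RatFunc.C c := by
  rw [← RatFunc.algebraMap_C, theta_alg]; simp

theorem det_mapK (M : Matrix (Fin l) (Fin l) ℚ) : (mapK M).det = RatFunc.C M.det := by
  rw [RingHom.map_det]; rfl

theorem mapK_mul (M N : Matrix (Fin l) (Fin l) ℚ) : mapK (M * N) = mapK M * mapK N :=
  Matrix.map_mul

theorem mapK_one : mapK (1 : Matrix (Fin l) (Fin l) ℚ) = 1 := by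
  simp [mapK]

theorem theta_Dn (M N : Matrix (Fin l) (Fin l) ℚ) (h : M * N = 1) :
    theta (Dn M) = (-(RatFunc.X)⁻¹) ^ l * RatFunc.C M.det * Dn N := by
  have h1 : theta (Dn M) = Matrix.det (1 - (RatFunc.X : K)⁻¹ • mapK M) := by
    rw [Dn, RingHom.map_det]
    congr 1
    ext1 i j
    by_cases h : i = j
    · subst h; simp [mapK, theta_X, theta_C]
    · simp [mapK, h, theta_X, theta_C]
  have h2 : 1 - (RatFunc.X : K)⁻¹ • mapK M = (-(RatFunc.X : K)⁻¹) • (mapK M *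
      (1 - (RatFunc.X : K) • mapK N)) := by
    rw [mul_sub, Matrix.mul_smul, ← mapK_mul, h, mapK_one, smul_sub, smul_smul, neg_mul,
      inv_mul_cancel₀ RatFunc.X_ne_zero]
    simp only [neg_smul, one_smul, mul_one]
    abel
  rw [h1, h2, Matrix.det_smul, Matrix.det_mul, det_mapK, Fintype.card_fin, Dn, mul_assoc]

theorem oneSubX_ne (e : ℕ) (he : 0 < e) : (1 : K) - RatFunc.X ^ e ≠ 0 := by
  intro h
  have h1 := phi_geo e he
  rw [h, inv_zero, map_zero] at h1
  have h2 : geo e 1 = 0 := aF_inj (by rw [← h1, map_zero])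
  have := geo_mul e he 1
  rw [h2, zero_mul] at this
  exact zero_ne_one this

theorem b_eq (m : Fin l → ℕ)
    (hex : (Fintype.card G : K)⁻¹ * ∑ g, (Dn (ρ g).val)⁻¹ = ∏ i, ((1 : K) - RatFunc.X ^ (m i + 1))⁻¹) :
    (Fintype.card G : K)⁻¹ * ∑ g, RatFunc.C (ρ g).val.det * (Dn (ρ g).val)⁻¹ =
      RatFunc.X ^ (∑ i, m i) * ∏ i, ((1 : K) - RatFunc.X ^ (m i + 1))⁻¹ := by
  have hX : (RatFunc.X : K) ≠ 0 := RatFunc.X_ne_zero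
  have h := congrArg theta hex
  rw [map_mul, map_inv₀, map_natCast, map_sum, map_prod] at h
  have e1 : ∀ g, theta (Dn (ρ g).val)⁻¹ = (-(RatFunc.X : K)) ^ l *
      (RatFunc.C (ρ g⁻¹).val.det * (Dn (ρ g⁻¹).val)⁻¹) := by
    intro g
    have hm : (ρ g).val * (ρ g⁻¹).val = 1 := by
      rw [← Units.val_mul, ← map_mul, mul_inv_cancel, map_one, Units.val_one]
    have hd : (ρ g).val.det * (ρ g⁻¹).val.det = 1 := by
      rw [← Matrix.det_mul, hm, Matrix.det_one]
    have hd2 : (RatFunc.C (ρ g).val.det : K)⁻¹ = RatFunc.C (ρ g⁻¹).val.det := by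
      rw [inv_eq_iff_eq_inv]
      apply eq_inv_of_mul_eq_one_left
      rw [← map_mul, hd, map_one]
    rw [map_inv₀, theta_Dn _ _ hm, mul_inv, mul_inv, hd2, mul_assoc]
    congr 1
    rw [← inv_pow, inv_neg, inv_inv]
  have e2 : ∀ i, theta ((1 : K) - RatFunc.X ^ (m i + 1))⁻¹ =
      (-RatFunc.X) * (RatFunc.X ^ m i * ((1 : K) - RatFunc.X ^ (m i + 1))⁻¹) := by
    intro i
    have hn := oneSubX_ne (m i + 1) (Nat.succ_pos _)
    rw [map_inv₀, map_sub, map_one, map_pow, theta_X]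
    apply inv_eq_of_mul_eq_one_right
    have : (1 - (RatFunc.X : K)⁻¹ ^ (m i + 1)) * RatFunc.X ^ (m i + 1) =
        -(1 - RatFunc.X ^ (m i + 1)) := by
      rw [sub_mul, ← mul_pow, inv_mul_cancel₀ hX]; ring
    calc _ = -((1 - (RatFunc.X : K)⁻¹ ^ (m i + 1)) * RatFunc.X ^ (m i + 1)) *
        ((1 : K) - RatFunc.X ^ (m i + 1))⁻¹ := by ring
      _ = 1 := by rw [this, neg_neg, mul_inv_cancel₀ hn]
  simp only [e1, e2] at h
  rw [← Finset.mul_sum, Finset.prod_mul_distrib, Finset.prod_mul_distrib, Finset.prod_const,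
    Finset.card_univ, Fintype.card_fin, Finset.prod_pow_eq_pow_sum, mul_left_comm] at h
  have h := mul_left_cancel₀ (pow_ne_zero l (neg_ne_zero.mpr hX)) h
  rw [← h]
  congr 1
  exact (Fintype.sum_equiv (Equiv.inv G) _ _ (fun g => rfl)).symm

theorem det_sign (g : G) : (ρ g).val.det * (1 - (ρ g).val).det =
    (-1) ^ l * (1 - (ρ g).val).det := by
  classical
  set B : Matrix (Fin l) (Fin l) ℚ := ∑ x, (ρ x).val.transpose * (ρ x).val with hB
  have hB0 : B.det ≠ 0 := by
    intro h
    obtain ⟨v, hv, hBv⟩ := Matrix.exists_mulVec_eq_zero_iff.mpr h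
    apply hv
    have h1 : ∑ x : G, ((ρ x).val.mulVec v) ⬝ᵥ ((ρ x).val.mulVec v) = 0 := by
      have := congrArg (fun w => v ⬝ᵥ w) hBv
      simp only [hB, Matrix.sum_mulVec, dotProduct_sum, dotProduct_zero] at this
      rw [← this]
      refine Finset.sum_congr rfl fun x _ => ?_
      rw [← Matrix.mulVec_mulVec, Matrix.dotProduct_mulVec v, Matrix.vecMul_transpose]
    have h2 := (Finset.sum_eq_zero_iff_of_nonneg (fun x _ => by
      exact Finset.sum_nonneg fun i _ => mul_self_nonneg _)).mp h1 1 (Finset.mem_univ _)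
    rw [map_one, Units.val_one, Matrix.one_mulVec] at h2
    exact dotProduct_self_eq_zero.mp h2
  have hinv : (ρ g).val.transpose * B * (ρ g).val = B := by
    rw [hB, Finset.mul_sum, Finset.sum_mul]
    refine Fintype.sum_equiv (Equiv.mulRight g) _ _ fun x => ?_
    simp only [Equiv.coe_mulRight, map_mul, Units.val_mul, Matrix.transpose_mul, mul_assoc]
  set w := (ρ g).val
  have hd : w.det * w.det = 1 := by
    have := congrArg Matrix.det hinv
    rw [Matrix.det_mul, Matrix.det_mul, Matrix.det_transpose] at this
    apply mul_left_cancel₀ hB0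
    linarith
  have h3 : (1 - w.transpose) * B * w = B * (w - 1) := by
    rw [sub_mul, sub_mul, hinv, one_mul, mul_sub, mul_one]
  have h4 := congrArg Matrix.det h3
  have h5 : (1 - w.transpose).det = (1 - w).det := by
    rw [← Matrix.det_transpose, Matrix.transpose_sub, Matrix.transpose_one, Matrix.transpose_transpose]
  have h6 : (w - 1).det = (-1) ^ l * (1 - w).det := by
    rw [← neg_sub, Matrix.det_neg, Fintype.card_fin]
  rw [Matrix.det_mul, Matrix.det_mul, Matrix.det_mul, h5, h6] at h4
  apply mul_left_cancel₀ hB0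
  linarith

end fin
theorem statement4 (G : Type) [Group G] [Fintype G] (l : ℕ)
    (ρ : G →* Matrix.GeneralLinearGroup (Fin l) ℚ)
    -- the representation is faithful
    (hfaithful : Function.Injective ρ)
    -- the group is generated by reflections
    (hrefl : Subgroup.closure
        {g : G | Matrix.rank ((1 : Matrix (Fin l) (Fin l) ℚ) - (ρ g).val) = 1} = ⊤)
    (m : Fin l → ℕ)
    -- `m` lists the exponents: the invariant degrees are `m i + 1`
    -- (Molien series of the invariant ring, Shephard–Todd)
    (hexponents : ((Fintype.card G : K))⁻¹ *
        ∑ g : G, (Matrix.det ((1 : Matrix (Fin l) (Fin l) K)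
          - (RatFunc.X : K) • mapK (ρ g).val))⁻¹
      = ∏ i : Fin l, ((1 : K) - (RatFunc.X : K) ^ (m i + 1))⁻¹) :
    -- the elliptic fake degree of the sign character sgn = det_E :
    ((RatFunc.X : K) - 1) ^ l * ((Fintype.card G : K))⁻¹ *
      ∑ g : G, Matrix.det (mapK (ρ g).val) *
        Matrix.det ((1 : Matrix (Fin l) (Fin l) K) - mapK (ρ g).val) /
        Matrix.det ((1 : Matrix (Fin l) (Fin l) K) - (RatFunc.X : K) • mapK (ρ g).val)
    = (1 - (RatFunc.X : K)) ^ l *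
        ∏ i : Fin l, ((1 : K) - (RatFunc.X : K) ^ (m i)) /
          ((1 : K) - (RatFunc.X : K) ^ (m i + 1)) := by
  have hex : (Fintype.card G : K)⁻¹ * ∑ g, (Dn (ρ g).val)⁻¹ =
    ∏ i, ((1 : K) - RatFunc.X ^ (m i + 1))⁻¹ := hexponents
  have hP : phi (∏ i, ((1 : K) - RatFunc.X ^ (m i + 1))⁻¹) = aF (∏ i, geo (m i + 1) 1) := by
    rw [map_prod, map_prod]
    exact Finset.prod_congr rfl fun i _ => phi_geo _ (Nat.succ_pos _)
  have ha : Hil1 (AC ρ) 1 = ∏ i, geo (m i + 1) 1 := by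
    apply aF_inj
    rw [← hP, ← hex, Hil1_eq]
    have := phi_sum ρ (fun _ => 1)
    simp only [map_one, one_mul] at this
    rw [this]
    simp only [MonoidHom.one_apply, map_one, one_mul]
  have hb : Hil1 (AC ρ) (detC (AC ρ)) = PowerSeries.X ^ (∑ i, m i) * ∏ i, geo (m i + 1) 1 := by
    apply aF_inj
    rw [map_mul, ← hP, map_pow, ← phi_X, ← map_pow, ← map_mul, ← b_eq ρ m hex, phi_sum, Hil1_eq]
    simp only [detC_apply, AC_apply, RingHom.map_det, RingHom.mapMatrix_apply]
  have hmain := main_series (AC ρ) (refl_AC ρ hrefl) m ha hb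
  have hdet : ∀ g, (1 - AC ρ g).det = algebraMap ℚ ℂ (1 - (ρ g).val).det := by
    intro g
    rw [RingHom.map_det, map_sub, map_one]; rfl
  simp only [hdet] at hmain
  have hK : (Fintype.card G : K)⁻¹ * ∑ g, RatFunc.C (1 - (ρ g).val).det * (Dn (ρ g).val)⁻¹ =
      (∏ i, ((1 : K) - RatFunc.X ^ (m i))) * ∏ i, ((1 : K) - RatFunc.X ^ (m i + 1))⁻¹ := by
    apply phi.injective
    rw [phi_sum, hmain, map_mul, map_mul, hP]
    have : aF (∏ i, (1 - PowerSeries.X ^ (m i))) = phi (∏ i, ((1 : K) - RatFunc.X ^ (m i))) := by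
      rw [map_prod, map_prod]
      refine Finset.prod_congr rfl fun i _ => ?_
      simp [phi_X]
    rw [this]
  have hterm : ∀ g : G, Matrix.det (mapK (ρ g).val) *
        Matrix.det ((1 : Matrix (Fin l) (Fin l) K) - mapK (ρ g).val) /
        Matrix.det ((1 : Matrix (Fin l) (Fin l) K) - (RatFunc.X : K) • mapK (ρ g).val) =
      (-1) ^ l * (RatFunc.C (1 - (ρ g).val).det * (Dn (ρ g).val)⁻¹) := by
    intro g
    have h1 : Matrix.det ((1 : Matrix (Fin l) (Fin l) K) - mapK (ρ g).val) =
        RatFunc.C (1 - (ρ g).val).det := by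
      rw [RingHom.map_det, map_sub, map_one]; rfl
    rw [h1, det_mapK, ← map_mul, det_sign, map_mul, map_pow, map_neg, map_one, div_eq_mul_inv,
      mul_assoc]
    rfl
  simp only [hterm]
  rw [← Finset.mul_sum]
  have h1 : (1 - (RatFunc.X : K)) ^ l = (RatFunc.X - 1) ^ l * (-1) ^ l := by
    rw [← mul_pow]; congr 1; ring
  simp only [div_eq_mul_inv]
  rw [Finset.prod_mul_distrib, ← hK, h1]
  ring
end
end

section
/- In the Weyl group of type F_4, the two elliptic conjugacy classes labelled D_4 and C_3×A_1 have equal characteristic polynomials: det_E(1-qw) = (q^3+1)(q+1) for a representative w of either class. Hence the rational functions 1/det(1-qw) over elliptic classes of W(F_4) are NOT linearly independent. -/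
set_option maxHeartbeats 1000000
set_option synthInstance.maxHeartbeats 400000

/-!
STATEMENT 12: in the Weyl group of type F_4 (realized as the group of linear
automorphisms of ℚ^4 preserving the F_4 root system), the two elliptic conjugacy
classes labelled `D_4` and `C_3×A_1` have the same characteristic polynomial
`det_E(1-qw) = (q^3+1)(q+1)`; hence the functions `1/det(1-qw)`, over representatives
of elliptic classes of W(F_4), are NOT linearly independent: there exist two elliptic,
non-conjugate elements with equal characteristic polynomials.
-/

open scoped BigOperators

noncomputable section

/-- the F_4 root system in ℚ^4 (one standard normalization): the short roots `±e_i`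
and `(±1/2,±1/2,±1/2,±1/2)`, and the long roots `±e_i ± e_j`. -/
def rootsF4 : Set (Fin 4 → ℚ) :=
  {v | (∀ i, v i = 0 ∨ v i = 1 ∨ v i = -1) ∧
        ((Finset.univ.filter (fun i => v i ≠ 0)).card = 1 ∨
         (Finset.univ.filter (fun i => v i ≠ 0)).card = 2)} ∪
  {v | ∀ i, v i = 1/2 ∨ v i = -1/2}

/-- membership in `W(F_4)`: a matrix permuting the F_4 root system. -/
def memWF4 (M : Matrix (Fin 4) (Fin 4) ℚ) : Prop :=
  M.mulVec '' rootsF4 = rootsF4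

def rootP (v : Fin 4 → ℚ) : Prop :=
  ((∀ i, v i = 0 ∨ v i = 1 ∨ v i = -1) ∧
        ((Finset.univ.filter (fun i => v i ≠ 0)).card = 1 ∨
         (Finset.univ.filter (fun i => v i ≠ 0)).card = 2)) ∨
  (∀ i, v i = 1/2 ∨ v i = -1/2)

instance rootPDec (v : Fin 4 → ℚ) : Decidable (rootP v) := by
  unfold rootP; infer_instance

theorem mem_rootsF4 (v : Fin 4 → ℚ) : v ∈ rootsF4 ↔ rootP v := Iff.rfl

def valsF4 : List ℚ := [0, 1, -1, 1/2, -1/2]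

theorem rootP_vals {v : Fin 4 → ℚ} (h : rootP v) (i : Fin 4) : v i ∈ valsF4 := by
  unfold valsF4
  simp only [List.mem_cons, List.not_mem_nil, or_false]
  rcases h with h | h
  · rcases h.1 i with h | h | h <;> simp [h]
  · rcases h i with h | h <;> simp [h]

theorem rootP_forall (Q : (Fin 4 → ℚ) → Prop)
    (h : ∀ a ∈ valsF4, ∀ b ∈ valsF4, ∀ c ∈ valsF4, ∀ d ∈ valsF4,
      rootP ![a, b, c, d] → Q ![a, b, c, d]) (v : Fin 4 → ℚ) (hv : rootP v) : Q v := by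
  have e : v = ![v 0, v 1, v 2, v 3] := by
    ext i; fin_cases i <;> rfl
  rw [e] at hv ⊢
  rw [e] at hv
  exact h _ (rootP_vals hv 0) _ (rootP_vals hv 1) _ (rootP_vals hv 2) _ (rootP_vals hv 3) hv

theorem memWF4_of (M M' : Matrix (Fin 4) (Fin 4) ℚ) (hM : M * M' = 1)
    (h1 : ∀ v, rootP v → rootP (M.mulVec v)) (h2 : ∀ v, rootP v → rootP (M'.mulVec v)) :
    memWF4 M := by
  apply Set.Subset.antisymm
  · rintro _ ⟨v, hv, rfl⟩
    exact h1 v hv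
  · intro v hv
    exact ⟨M'.mulVec v, h2 v hv, by simp [Matrix.mulVec_mulVec, hM]⟩

def matA : Matrix (Fin 4) (Fin 4) ℚ :=
  !![0, 0, -1, 0; 1, 0, 0, 0; 0, 1, 0, 0; 0, 0, 0, -1]

def matB : Matrix (Fin 4) (Fin 4) ℚ :=
  !![-1/2, 1/2, 1/2, 1/2; 1/2, -1/2, 1/2, 1/2; 1/2, 1/2, -1/2, 1/2; -1/2, -1/2, -1/2, 1/2]

theorem matA_mem : memWF4 matA := by
  apply memWF4_of matA matA.transpose
  · decide +kernel
  · apply rootP_forall; decide +kernel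
  · apply rootP_forall; decide +kernel

theorem matB_mem : memWF4 matB := by
  apply memWF4_of matB matB.transpose
  · decide +kernel
  · apply rootP_forall; decide +kernel
  · apply rootP_forall; decide +kernel

theorem matB_eig (v : Fin 4 → ℚ) (hv : rootP v) : matB.mulVec v = -v →
    ∃ i j, i ≠ j ∧ v i = 1 ∧ v j = -1 := by
  revert v
  apply rootP_forall; decide +kernel

theorem rootP_le {v : Fin 4 → ℚ} (h : rootP v) (i : Fin 4) : v i ≤ 1 ∧ -1 ≤ v i := by
  rcases h with h | h
  · rcases h.1 i with h | h | h <;> norm_num [h]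
  · rcases h i with h | h <;> norm_num [h]

/-- A root with entries `1`, `-1` at two places is determined by these. -/
theorem rootP_det (v : Fin 4 → ℚ) (hv : rootP v) : ∀ i j, i ≠ j → v i = 1 → v j = -1 →
    ∀ k, k ≠ i → k ≠ j → v k = 0 := by
  revert v
  apply rootP_forall; decide +kernel

theorem not_conj : ¬ (∃ N : Matrix (Fin 4) (Fin 4) ℚ, memWF4 N ∧ N * matA = matB * N) := by
  rintro ⟨N, hN, hc⟩
  have hr : ∀ v, rootP v → rootP (N.mulVec v) := fun v hv => by
    have : N.mulVec v ∈ rootsF4 := hN ▸ Set.mem_image_of_mem _ hv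
    exact this
  have h4 := hr ![0, 0, 0, 1] (by decide +kernel)
  have h1 := hr ![1, 0, 0, 0] (by decide +kernel)
  have hp := hr ![1, 0, 0, 1] (by decide +kernel)
  have hm := hr ![-1, 0, 0, 1] (by decide +kernel)
  have ep : (![1, 0, 0, 1] : Fin 4 → ℚ) = ![0, 0, 0, 1] + ![1, 0, 0, 0] := by decide +kernel
  have em : (![-1, 0, 0, 1] : Fin 4 → ℚ) = ![0, 0, 0, 1] - ![1, 0, 0, 0] := by decide +kernel
  have eA : matA.mulVec ![0, 0, 0, 1] = -![0, 0, 0, 1] := by decide +kernel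
  rw [ep, Matrix.mulVec_add] at hp
  rw [em, Matrix.mulVec_sub] at hm
  have hB : matB.mulVec (N.mulVec ![0, 0, 0, 1]) = -(N.mulVec ![0, 0, 0, 1]) := by
    rw [Matrix.mulVec_mulVec, ← hc, ← Matrix.mulVec_mulVec, eA, Matrix.mulVec_neg]
  generalize N.mulVec ![0, 0, 0, 1] = r at *
  generalize N.mulVec ![1, 0, 0, 0] = s at *
  obtain ⟨i, j, hij, hi, hj⟩ := matB_eig r h4 hB
  have a1 := rootP_le hp i
  have a2 := rootP_le hm i
  have a3 := rootP_le hp j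
  have a4 := rootP_le hm j
  simp only [Pi.add_apply, Pi.sub_apply] at a1 a2 a3 a4
  have si : s i = 0 := by linarith [a1.1, a1.2, a2.1, a2.2]
  have sj : s j = 0 := by linarith [a3.1, a3.2, a4.1, a4.2]
  have s0 : s = 0 := by
    ext k
    by_cases ki : k = i
    · rw [ki, si]; rfl
    by_cases kj : k = j
    · rw [kj, sj]; rfl
    have b1 := rootP_det r h4 i j hij hi hj k ki kj
    have b2 := rootP_det _ hp i j hij (by simp [hi, si]) (by simp [hj, sj]) k ki kj
    simp only [Pi.add_apply, b1, zero_add] at b2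
    exact b2
  rw [s0] at h1
  exact absurd h1 (by decide +kernel)

theorem detA (q : K) : Matrix.det ((1 : Matrix (Fin 4) (Fin 4) K) - q • (matA.map RatFunc.C))
    = (q ^ 3 + 1) * (q + 1) := by
  simp [matA, Matrix.det_succ_row_zero, Fin.sum_univ_succ, Fin.succAbove, Matrix.one_apply]
  try ring

theorem detB (q : K) : Matrix.det ((1 : Matrix (Fin 4) (Fin 4) K) - q • (matB.map RatFunc.C))
    = (q ^ 3 + 1) * (q + 1) := by
  simp [matB, Matrix.det_succ_row_zero, Fin.sum_univ_succ, Fin.succAbove, Matrix.one_apply]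
  try ring

theorem statement12 :
    ∃ A B : Matrix (Fin 4) (Fin 4) ℚ,
      memWF4 A ∧ memWF4 B ∧
      -- both classes (labelled D_4 and C_3×A_1) are elliptic …
      Matrix.det ((1 : Matrix (Fin 4) (Fin 4) ℚ) - A) ≠ 0 ∧
      Matrix.det ((1 : Matrix (Fin 4) (Fin 4) ℚ) - B) ≠ 0 ∧
      -- … A is a Coxeter element of a D_4 subsystem: it has order 6 and its class
      -- has the stated characteristic polynomial; B is a product of a Coxeter element
      -- of a C_3 subsystem with an orthogonal reflection (an involution times an
      -- order-6 part), in particular the two are NOT conjugate in W(F_4) …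
      ¬ (∃ N : Matrix (Fin 4) (Fin 4) ℚ, memWF4 N ∧ N * A = B * N) ∧
      -- … yet both have characteristic polynomial det(1-qw) = (q^3+1)(q+1)
      (∀ q : K, Matrix.det ((1 : Matrix (Fin 4) (Fin 4) K) - q • (A.map RatFunc.C))
          = (q ^ 3 + 1) * (q + 1)) ∧
      (∀ q : K, Matrix.det ((1 : Matrix (Fin 4) (Fin 4) K) - q • (B.map RatFunc.C))
          = (q ^ 3 + 1) * (q + 1)) ∧
      -- hence the family `1/det(1-qw)` over (pairwise non-conjugate representatives
      -- of) elliptic classes is not linearly independent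
      ¬ LinearIndependent ℚ (fun b : Bool =>
          (Matrix.det ((1 : Matrix (Fin 4) (Fin 4) K)
            - (RatFunc.X : K) • ((cond b A B).map RatFunc.C)))⁻¹) := by
  refine ⟨matA, matB, matA_mem, matB_mem, ?_, ?_, not_conj, detA, detB, ?_⟩
  · decide +kernel
  · decide +kernel
  · intro h
    have := h.injective (a₁ := true) (a₂ := false) (by
      simp only [cond_true, cond_false]
      rw [detA, detB])
    exact absurd this (by decide)
end
end
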